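/- arXiv:2508.01243 — 4 statements merged into one kernel-verified Lean document; each statement's English description precedes it below -/
import Mathlib

section
/- Let x_1,…,x_n ∈ ℝ^d, y_1,…,y_n ∈ ℝ^d and θ ∈ S^{d−1} be such that the families (P_θ x_i)_{i=1}^n and (P_θ y_i)_{i=1}^n are injective. Let σ_θ and τ_θ be the unique permutations of {1,…,n} sorting (P_θ x_i)_i and (P_θ y_i)_i increasingly. Then for μ1 = (1/n)Σ_i δ_{x_i} and μ2 = (1/n)Σ_i δ_{y_i}, PS_θ²(μ1, μ2) = (1/n) Σ_{i=1}^n ‖x_{σ_θ(i)} − y_{τ_θ(i)}‖². -/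
open MeasureTheory Filter Topology ProbabilityTheory
open scoped ENNReal RealInnerProductSpace Classical

noncomputable section

/-- Euclidean space ℝ^d. -/
abbrev Euc (d : ℕ) : Type := EuclideanSpace ℝ (Fin d)

/-- `P2` : Borel probability measures with finite second moment. -/
def P2 {E : Type*} [NormedAddCommGroup E] [MeasurableSpace E] : Set (Measure E) :=
  {μ | IsProbabilityMeasure μ ∧ Integrable (fun x => ‖x‖ ^ 2) μ}

/-- Couplings between two measures. -/
def Coupling {E F : Type*} [MeasurableSpace E] [MeasurableSpace F]
    (μ : Measure E) (ν : Measure F) : Set (Measure (E × F)) :=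
  {π | IsProbabilityMeasure π ∧ π.map Prod.fst = μ ∧ π.map Prod.snd = ν}

/-- Quadratic transport cost of a plan. -/
def tCost {E : Type*} [NormedAddCommGroup E] [MeasurableSpace E]
    (π : Measure (E × E)) : ℝ :=
  ∫ p, ‖p.1 - p.2‖ ^ 2 ∂π

/-- Squared 2-Wasserstein distance. -/
def W2sq {E : Type*} [NormedAddCommGroup E] [MeasurableSpace E] (μ ν : Measure E) : ℝ :=
  sInf (tCost '' Coupling μ ν)

/-- 2-Wasserstein distance. -/
def W2 {E : Type*} [NormedAddCommGroup E] [MeasurableSpace E] (μ ν : Measure E) : ℝ :=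
  Real.sqrt (W2sq μ ν)

/-- Optimal transport plans for the quadratic cost. -/
def OptPlan {E : Type*} [NormedAddCommGroup E] [MeasurableSpace E]
    (μ ν : Measure E) : Set (Measure (E × E)) :=
  {π | π ∈ Coupling μ ν ∧ tCost π = W2sq μ ν}

/-- `Gamma ν μ1 μ2` : probability measures on `E × E × E` whose (1,2)-marginal is an optimal
plan between `ν` and `μ1` and whose (1,3)-marginal is an optimal plan between `ν` and `μ2`. -/
def Gamma {E : Type*} [NormedAddCommGroup E] [MeasurableSpace E]
    (ν μ1 μ2 : Measure E) : Set (Measure (E × E × E)) :=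
  {ρ | IsProbabilityMeasure ρ ∧
    ρ.map (fun p => (p.1, p.2.1)) ∈ OptPlan ν μ1 ∧
    ρ.map (fun p => (p.1, p.2.2)) ∈ OptPlan ν μ2}

/-- Cost `∫ ‖x1 − x2‖² dρ(y, x1, x2)` of a 3-plan. -/
def pivotCost {E : Type*} [NormedAddCommGroup E] [MeasurableSpace E]
    (ρ : Measure (E × E × E)) : ℝ :=
  ∫ p, ‖p.2.1 - p.2.2‖ ^ 2 ∂ρ

/-- Squared ν-based Wasserstein discrepancy. -/
def Wnusq {E : Type*} [NormedAddCommGroup E] [MeasurableSpace E]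
    (ν μ1 μ2 : Measure E) : ℝ :=
  sInf (pivotCost '' Gamma ν μ1 μ2)

/-- ν-based Wasserstein discrepancy. -/
def Wnu {E : Type*} [NormedAddCommGroup E] [MeasurableSpace E]
    (ν μ1 μ2 : Measure E) : ℝ :=
  Real.sqrt (Wnusq ν μ1 μ2)

/-- Weak convergence of a sequence of measures (against bounded continuous functions). -/
def WeakConv {E : Type*} [MeasurableSpace E] [TopologicalSpace E]
    (μs : ℕ → Measure E) (μ : Measure E) : Prop :=
  ∀ f : BoundedContinuousFunction E ℝ,
    Tendsto (fun n => ∫ x, f x ∂(μs n)) atTop (𝓝 (∫ x, f x ∂μ))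

/-- Quantile function (pseudo-inverse c.d.f.) of a measure on ℝ. -/
def quantile (ν : Measure ℝ) (t : ℝ) : ℝ :=
  sInf {s : ℝ | ENNReal.ofReal t ≤ ν (Set.Iic s)}

/-- Pushforward of `μ` by the projection `P_θ : x ↦ ⟪θ, x⟫`. -/
def projLine {d : ℕ} (θ : Euc d) (μ : Measure (Euc d)) : Measure ℝ :=
  μ.map (fun x => ⟪θ, x⟫)

/-- `μ_θ[μ1, μ2]` : the (unique) Wasserstein mean of `Q_θ#μ1` and `Q_θ#μ2`, given by the
explicit quantile formula `[(½ F_{ν1}^{[-1]} + ½ F_{ν2}^{[-1]})·θ]#L_{[0,1]}`. -/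
def pivotMiddle {d : ℕ} (θ : Euc d) (μ1 μ2 : Measure (Euc d)) : Measure (Euc d) :=
  (volume.restrict (Set.Icc (0 : ℝ) 1)).map
    (fun t => ((1 / 2) * quantile (projLine θ μ1) t
      + (1 / 2) * quantile (projLine θ μ2) t) • θ)

/-- Squared Pivot Sliced discrepancy. -/
def PSsq {d : ℕ} (θ : Euc d) (μ1 μ2 : Measure (Euc d)) : ℝ :=
  Wnusq (pivotMiddle θ μ1 μ2) μ1 μ2

/-- Pivot Sliced discrepancy. -/
def PS {d : ℕ} (θ : Euc d) (μ1 μ2 : Measure (Euc d)) : ℝ :=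
  Real.sqrt (PSsq θ μ1 μ2)

/-- `π_θ[μ1, μ2]` : the unique optimal 1D plan between `P_θ#μ1` and `P_θ#μ2`
(co-monotone quantile coupling). -/
def piTheta {d : ℕ} (θ : Euc d) (μ1 μ2 : Measure (Euc d)) : Measure (ℝ × ℝ) :=
  (volume.restrict (Set.Icc (0 : ℝ) 1)).map
    (fun t => (quantile (projLine θ μ1) t, quantile (projLine θ μ2) t))

/-- `Ω_θ(μ1, μ2)` : couplings of `μ1, μ2` whose projection by `(P_θ, P_θ)` is `π_θ[μ1, μ2]`. -/
def OmegaTheta {d : ℕ} (θ : Euc d) (μ1 μ2 : Measure (Euc d)) :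
    Set (Measure (Euc d × Euc d)) :=
  {ω | ω ∈ Coupling μ1 μ2 ∧
    ω.map (fun p => (⟪θ, p.1⟫, ⟪θ, p.2⟫)) = piTheta θ μ1 μ2}

/-- Squared constrained Wasserstein discrepancy `CW_θ²`. -/
def CWsq {d : ℕ} (θ : Euc d) (μ1 μ2 : Measure (Euc d)) : ℝ :=
  sInf (tCost '' OmegaTheta θ μ1 μ2)

/-- Wasserstein means: minimisers of `μ ↦ W₂²(μ1, μ) + W₂²(μ, μ2)` over `P2`. -/
def WMean {d : ℕ} (μ1 μ2 : Measure (Euc d)) : Set (Measure (Euc d)) :=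
  {μ | μ ∈ (P2 : Set (Measure (Euc d))) ∧
    ∀ μ' ∈ (P2 : Set (Measure (Euc d))),
      W2sq μ1 μ + W2sq μ μ2 ≤ W2sq μ1 μ' + W2sq μ' μ2}

/-- Uniform empirical measure `1/n ∑ δ_{x_i}`. -/
def empMeasure {d n : ℕ} (x : Fin n → Euc d) : Measure (Euc d) :=
  (n : ℝ≥0∞)⁻¹ • ∑ i, Measure.dirac (x i)

/-! The sorted clouds `a = x ∘ σ` and `b = y ∘ τ` have the pivot `(1 / n) ∑ δ_{m_i θ}`, where
`m_i` is the midpoint of `⟪θ, a_i⟫` and `⟪θ, b_i⟫`. Since `m_i` and `⟪θ, b_i⟫` are both strictly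
increasing in `i`, the points `m_i θ` are strict subgradients, at `b_i`, of a function of `⟪θ, ·⟫`
alone. For a coupling of the pivot with the cloud `b`, the excess of its cost over that of the map
`m_i θ ↦ b_i` is then twice the integral of a subgradient gap which is positive off the graph of
this map. So this graph is the only optimal plan, and likewise for `a`; hence there is a single
admissible three-plan, and `PS_θ²` is its cost. -/

section StrictSubgradient

variable {ι K : Type*} [LinearOrder ι] [Field K] [LinearOrder K] [IsStrictOrderedRing K]

theorem exists_strict_subgradient_of_strictMono [Finite ι] {m v : ι → K} (hm : StrictMono m)
    (hv : StrictMono v) :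
    ∃ G : K → K, ∀ i j, i ≠ j → m i * (v j - v i) < G (v j) - G (v i) := by
  cases nonempty_fintype ι
  suffices ∀ s : Finset ι, ∃ G : K → K, ∀ i ∈ s, ∀ j ∈ s, i ≠ j →
      m i * (v j - v i) < G (v j) - G (v i) by simpa using this Finset.univ
  intro s
  induction s using Finset.induction_on_max with
  | empty => simp
  | insert a s ha ih =>
    obtain ⟨G, hG⟩ := ih
    have hG_le : ∀ i ∈ s, ∀ j ∈ s, m i * (v j - v i) ≤ G (v j) - G (v i) := fun i hi j hj => by
      rcases eq_or_ne i j with rfl | hij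
      · simp
      · exact (hG i hi j hj hij).le
    obtain ⟨g, hg_lower, hg_upper⟩ := Order.exists_between_finsets
      (s.image fun i => G (v i) + m i * (v a - v i))
      (s.image fun j => G (v j) + m a * (v a - v j)) (by
        simp only [Finset.forall_mem_image]
        intro i hi j hj
        have hslope : m i * (v a - v j) < m a * (v a - v j) :=
          mul_lt_mul_of_pos_right (hm (ha i hi)) (sub_pos.2 (hv (ha j hj)))
        linear_combination hslope + hG_le i hi j hj)
    simp only [Finset.forall_mem_image] at hg_lower hg_upper
    have hG_update : ∀ i ∈ s, Function.update G (v a) g (v i) = G (v i) := fun i hi =>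
      Function.update_of_ne (hv (ha i hi)).ne _ _
    refine ⟨Function.update G (v a) g, fun i hi j hj hij => ?_⟩
    rcases Finset.mem_insert.1 hi with rfl | his <;> rcases Finset.mem_insert.1 hj with rfl | hjs
    · exact absurd rfl hij
    · rw [hG_update j hjs, Function.update_self]
      linear_combination hg_upper hjs
    · rw [hG_update i his, Function.update_self]
      linear_combination hg_lower his
    · rw [hG_update i his, hG_update j hjs]
      exact hG i his j hjs hij

end StrictSubgradient

section Coupling

variable {E F : Type*} [MeasurableSpace E] [MeasurableSpace F] {μ : Measure E} {T : E → F}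

lemma measurePreserving_fst_of_mem_coupling {ν : Measure F} {π : Measure (E × F)}
    (hπ : π ∈ Coupling μ ν) : MeasurePreserving Prod.fst π μ :=
  ⟨measurable_fst, hπ.2.1⟩

lemma measurePreserving_snd_of_mem_coupling {ν : Measure F} {π : Measure (E × F)}
    (hπ : π ∈ Coupling μ ν) : MeasurePreserving Prod.snd π ν :=
  ⟨measurable_snd, hπ.2.2⟩

lemma map_graph_mem_coupling (μ : Measure E) [IsProbabilityMeasure μ] (hT : Measurable T) :
    μ.map (fun x => (x, T x)) ∈ Coupling μ (μ.map T) := by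
  have hgraph : Measurable fun x => (x, T x) := by fun_prop
  refine ⟨Measure.isProbabilityMeasure_map hgraph.aemeasurable, ?_, ?_⟩
  · rw [Measure.map_map measurable_fst hgraph]
    exact Measure.map_id
  · rw [Measure.map_map measurable_snd hgraph]
    rfl

lemma ae_map_graph [MeasurableEq F] (μ : Measure E) (hT : Measurable T) :
    ∀ᵐ p ∂μ.map (fun x => (x, T x)), p.2 = T p.1 :=
  (ae_map_iff (by fun_prop) (measurableSet_eq_fun (by fun_prop) (by fun_prop))).2
    (ae_of_all _ fun _ => rfl)

lemma eq_map_graph_of_ae_eq {π : Measure (E × F)} (hT : Measurable T)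
    (h : ∀ᵐ p ∂π, p.2 = T p.1) : π = (π.map Prod.fst).map fun x => (x, T x) := by
  rw [Measure.map_map (by fun_prop) measurable_fst]
  conv_lhs => rw [← Measure.map_id (μ := π)]
  exact Measure.map_congr (h.mono fun p hp => Prod.ext rfl hp)

section PushforwardTarget

variable {π : Measure (E × F)} {φ : F → ℝ}

lemma measurePreserving_comp_fst_of_mem_coupling (hT : Measurable T)
    (hπ : π ∈ Coupling μ (μ.map T)) : MeasurePreserving (fun p => T p.1) π (μ.map T) :=
  (hT.measurePreserving μ).comp (measurePreserving_fst_of_mem_coupling hπ)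

lemma integrable_comp_snd_sub_comp_fst (hT : Measurable T) (hφ : Integrable φ (μ.map T))
    (hπ : π ∈ Coupling μ (μ.map T)) : Integrable (fun p => φ p.2 - φ (T p.1)) π :=
  ((measurePreserving_snd_of_mem_coupling hπ).integrable_comp_of_integrable hφ).sub
    ((measurePreserving_comp_fst_of_mem_coupling hT hπ).integrable_comp_of_integrable hφ)

lemma integral_comp_snd_sub_comp_fst (hT : Measurable T) (hφ : Integrable φ (μ.map T))
    (hπ : π ∈ Coupling μ (μ.map T)) : ∫ p, (φ p.2 - φ (T p.1)) ∂π = 0 := by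
  have hsnd := measurePreserving_snd_of_mem_coupling hπ
  have hTfst := measurePreserving_comp_fst_of_mem_coupling hT hπ
  refine (integral_sub (hsnd.integrable_comp_of_integrable hφ)
    (hTfst.integrable_comp_of_integrable hφ)).trans (sub_eq_zero.2 ?_)
  exact (hsnd.hasLaw.integral_comp hφ.1).trans (hTfst.hasLaw.integral_comp hφ.1).symm

end PushforwardTarget

end Coupling

section SecondMoment

variable {E : Type*} [NormedAddCommGroup E] [MeasurableSpace E] [BorelSpace E]
  [SecondCountableTopology E] {μ : Measure E} {π : Measure (E × E)}

lemma memLp_two_id_of_mem_p2 (hμ : μ ∈ P2) : MemLp id 2 μ :=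
  (memLp_two_iff_integrable_sq_norm measurable_id.aestronglyMeasurable).2 hμ.2

lemma integrable_norm_sub_sq_of_mem_coupling {ν : Measure E} (hμ : μ ∈ P2) (hν : ν ∈ P2)
    (hπ : π ∈ Coupling μ ν) : Integrable (fun p => ‖p.1 - p.2‖ ^ 2) π :=
  (((memLp_two_id_of_mem_p2 hμ).comp_measurePreserving
      (measurePreserving_fst_of_mem_coupling hπ)).sub
    ((memLp_two_id_of_mem_p2 hν).comp_measurePreserving
      (measurePreserving_snd_of_mem_coupling hπ))).integrable_norm_pow two_ne_zero

variable {T : E → E}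

lemma integrable_norm_fst_sub_sq (hμ : μ ∈ P2) (hT : Measurable T) (hν : μ.map T ∈ P2)
    (hπ : π.map Prod.fst = μ) : Integrable (fun p => ‖p.1 - T p.1‖ ^ 2) π := by
  have := hμ.1
  exact (((measurable_id.prodMk hT).measurePreserving μ).comp
    ⟨measurable_fst, hπ⟩).integrable_comp_of_integrable
      (integrable_norm_sub_sq_of_mem_coupling hμ hν (map_graph_mem_coupling μ hT))

lemma tCost_map_graph (hT : Measurable T) :
    tCost ((π.map Prod.fst).map fun x => (x, T x)) = ∫ p, ‖p.1 - T p.1‖ ^ 2 ∂π := by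
  rw [Measure.map_map (by fun_prop) measurable_fst, tCost, integral_map (by fun_prop)
    (Measurable.aestronglyMeasurable (by fun_prop))]
  rfl

end SecondMoment

section SubgradientGap

variable {E : Type*} [NormedAddCommGroup E] [InnerProductSpace ℝ E] {T : E → E} {G : E → ℝ}

/-- The gap in the subgradient inequality `⟪x, y - T x⟫ ≤ G y - G (T x)` expressing that `x` is a
subgradient of `G` at `T x`, as a function of `(x, y)`. It measures by how much a transport plan
deviates from the graph of `T`. -/
def subgradientGap (T : E → E) (G : E → ℝ) (p : E × E) : ℝ :=
  G p.2 - G (T p.1) - ⟪p.1, p.2 - T p.1⟫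

lemma norm_sub_sq_eq_add_subgradientGap (T : E → E) (G : E → ℝ) (p : E × E) :
    ‖p.1 - p.2‖ ^ 2 = ‖p.1 - T p.1‖ ^ 2 + 2 * subgradientGap T G p +
      ((‖p.2‖ ^ 2 - 2 * G p.2) - (‖T p.1‖ ^ 2 - 2 * G (T p.1))) := by
  rw [subgradientGap, norm_sub_sq_real, norm_sub_sq_real, inner_sub_right]
  ring

variable [MeasurableSpace E] {μ : Measure E} {π : Measure (E × E)}

lemma ae_subgradientGap_pos {ν : Measure E} {B : Set E} (hB : ∀ᵐ y ∂ν, y ∈ B)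
    (hstrict : ∀ᵐ x ∂μ, ∀ y ∈ B, y ≠ T x → ⟪x, y - T x⟫ < G y - G (T x))
    (hπ : π ∈ Coupling μ ν) : ∀ᵐ p ∂π, p.2 ≠ T p.1 → 0 < subgradientGap T G p := by
  filter_upwards [(measurePreserving_snd_of_mem_coupling hπ).quasiMeasurePreserving.ae hB,
    (measurePreserving_fst_of_mem_coupling hπ).quasiMeasurePreserving.ae hstrict]
    with p hp₂ hp₁ hne using sub_pos.2 (hp₁ p.2 hp₂ hne)

lemma ae_subgradientGap_nonneg (hpos : ∀ᵐ p ∂π, p.2 ≠ T p.1 → 0 < subgradientGap T G p) :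
    0 ≤ᵐ[π] subgradientGap T G := by
  filter_upwards [hpos] with p hp
  by_cases hpT : p.2 = T p.1
  · simp [subgradientGap, hpT]
  · exact (hp hpT).le

variable [BorelSpace E] [SecondCountableTopology E]

lemma integrable_subgradientGap (hμ : μ ∈ P2) (hT : Measurable T) (hν : μ.map T ∈ P2)
    (hG : Integrable G (μ.map T)) (hπ : π ∈ Coupling μ (μ.map T)) :
    Integrable (subgradientGap T G) π := by
  refine ((((integrable_norm_sub_sq_of_mem_coupling hμ hν hπ).sub
    (integrable_norm_fst_sub_sq hμ hT hν hπ.2.1)).sub (integrable_comp_snd_sub_comp_fst hT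
      (hν.2.sub (hG.const_mul 2)) hπ)).const_mul (1 / 2)).congr (ae_of_all _ fun p => ?_)
  simp only [Pi.sub_apply, norm_sub_sq_eq_add_subgradientGap T G p]
  ring

lemma tCost_eq_add_integral_subgradientGap (hμ : μ ∈ P2) (hT : Measurable T)
    (hν : μ.map T ∈ P2) (hG : Integrable G (μ.map T)) (hπ : π ∈ Coupling μ (μ.map T)) :
    tCost π = tCost (μ.map fun x => (x, T x)) + 2 * ∫ p, subgradientGap T G p ∂π := by
  have hφ : Integrable (fun y => ‖y‖ ^ 2 - 2 * G y) (μ.map T) := hν.2.sub (hG.const_mul 2)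
  have hcost := integrable_norm_fst_sub_sq hμ hT hν hπ.2.1
  have hgap := (integrable_subgradientGap hμ hT hν hG hπ).const_mul 2
  rw [tCost, integral_congr_ae (ae_of_all _ (norm_sub_sq_eq_add_subgradientGap T G)),
    integral_add (hcost.fun_add hgap) (integrable_comp_snd_sub_comp_fst hT hφ hπ),
    integral_comp_snd_sub_comp_fst hT hφ hπ, add_zero, integral_add hcost hgap,
    integral_const_mul, ← tCost_map_graph hT, hπ.2.1]

theorem optPlan_eq_graph_of_strict_subgradient (hμ : μ ∈ P2) (hT : Measurable T)
    (hν : μ.map T ∈ P2) (hG : Integrable G (μ.map T)) {B : Set E} (hB : ∀ᵐ y ∂μ.map T, y ∈ B)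
    (hstrict : ∀ᵐ x ∂μ, ∀ y ∈ B, y ≠ T x → ⟪x, y - T x⟫ < G y - G (T x)) :
    OptPlan μ (μ.map T) = {μ.map fun x => (x, T x)} := by
  have := hμ.1
  have hgap_nonneg : ∀ π ∈ Coupling μ (μ.map T), 0 ≤ᵐ[π] subgradientGap T G := fun π hπ =>
    ae_subgradientGap_nonneg (ae_subgradientGap_pos hB hstrict hπ)
  have hgraph := map_graph_mem_coupling μ hT
  have hW2sq : W2sq μ (μ.map T) = tCost (μ.map fun x => (x, T x)) := by
    refine IsLeast.csInf_eq ⟨⟨_, hgraph, rfl⟩, ?_⟩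
    rintro _ ⟨π, hπ, rfl⟩
    rw [tCost_eq_add_integral_subgradientGap hμ hT hν hG hπ]
    linarith [integral_nonneg_of_ae (hgap_nonneg π hπ)]
  refine Set.eq_singleton_iff_unique_mem.2 ⟨⟨hgraph, hW2sq.symm⟩, ?_⟩
  rintro π ⟨hπ, hopt⟩
  have hgap_zero : subgradientGap T G =ᵐ[π] 0 := by
    refine (integral_eq_zero_iff_of_nonneg_ae (hgap_nonneg π hπ)
      (integrable_subgradientGap hμ hT hν hG hπ)).1 ?_
    linarith [tCost_eq_add_integral_subgradientGap hμ hT hν hG hπ]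
  have hπT : ∀ᵐ p ∂π, p.2 = T p.1 := by
    filter_upwards [ae_subgradientGap_pos hB hstrict hπ, hgap_zero] with p hp hp₀
    by_contra hne
    exact (hp hne).ne' hp₀
  rw [eq_map_graph_of_ae_eq hT hπT, hπ.2.1]

end SubgradientGap

section Pivot

variable {E : Type*} [NormedAddCommGroup E] [MeasurableSpace E] [BorelSpace E]
  [SecondCountableTopology E] {ν μ₁ μ₂ : Measure E} [IsProbabilityMeasure ν] {T₁ T₂ : E → E}

theorem gamma_eq_singleton_of_optPlan_eq_graph (hT₁ : Measurable T₁) (hT₂ : Measurable T₂)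
    (h₁ : OptPlan ν μ₁ = {ν.map fun y => (y, T₁ y)})
    (h₂ : OptPlan ν μ₂ = {ν.map fun y => (y, T₂ y)}) :
    Gamma ν μ₁ μ₂ = {ν.map fun y => (y, T₁ y, T₂ y)} := by
  have hfst : Measurable fun p : E × E × E => (p.1, p.2.1) := by fun_prop
  have hsnd : Measurable fun p : E × E × E => (p.1, p.2.2) := by fun_prop
  ext ρ
  simp only [Gamma, h₁, h₂, Set.mem_ofPred_eq, Set.mem_singleton_iff]
  constructor
  · rintro ⟨-, hρ₁, hρ₂⟩
    have hν : ρ.map Prod.fst = ν := by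
      rw [← (map_graph_mem_coupling ν hT₁).2.1, ← hρ₁, Measure.map_map measurable_fst hfst]
      rfl
    have hae₁ : ∀ᵐ p ∂ρ, p.2.1 = T₁ p.1 :=
      ae_of_ae_map hfst.aemeasurable (hρ₁ ▸ ae_map_graph ν hT₁)
    have hae₂ : ∀ᵐ p ∂ρ, p.2.2 = T₂ p.1 :=
      ae_of_ae_map hsnd.aemeasurable (hρ₂ ▸ ae_map_graph ν hT₂)
    rw [← hν]
    refine eq_map_graph_of_ae_eq (by fun_prop) ?_
    filter_upwards [hae₁, hae₂] with p hp₁ hp₂ using Prod.ext hp₁ hp₂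
  · rintro rfl
    refine ⟨Measure.isProbabilityMeasure_map (by fun_prop), ?_, ?_⟩
    · exact Measure.map_map hfst (by fun_prop)
    · exact Measure.map_map hsnd (by fun_prop)

theorem wnusq_eq_integral_of_optPlan_eq_graph (hT₁ : Measurable T₁) (hT₂ : Measurable T₂)
    (h₁ : OptPlan ν μ₁ = {ν.map fun y => (y, T₁ y)})
    (h₂ : OptPlan ν μ₂ = {ν.map fun y => (y, T₂ y)}) :
    Wnusq ν μ₁ μ₂ = ∫ y, ‖T₁ y - T₂ y‖ ^ 2 ∂ν := by
  rw [Wnusq, gamma_eq_singleton_of_optPlan_eq_graph hT₁ hT₂ h₁ h₂, Set.image_singleton,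
    csInf_singleton, pivotCost, integral_map (by fun_prop)
      (Measurable.aestronglyMeasurable (by fun_prop))]

end Pivot

section FiniteSupport

lemma injective_smul_of_injective_inner {ι E : Type*} [NormedAddCommGroup E]
    [InnerProductSpace ℝ E] {m : ι → ℝ} {θ : E} {b : ι → E} (hm : Function.Injective m)
    (hb : Function.Injective fun i => (⟪θ, b i⟫ : ℝ)) :
    Function.Injective fun i => m i • θ := by
  intro i j hij
  rcases eq_or_ne θ 0 with rfl | hθ
  · exact hb (by simp)
  · exact hm (smul_left_injective ℝ hθ hij)

variable {ι E : Type*} [Finite ι] [MeasurableSpace ι] [MeasurableSpace E]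

lemma integrable_map_of_finite [MeasurableSingletonClass E] (κ : Measure ι) [IsFiniteMeasure κ]
    (a : ι → E) (f : E → ℝ) : Integrable f (κ.map a) := by
  rw [← Measure.restrict_eq_self_of_ae_mem
    (ae_map_mem_range a (Set.finite_range a).measurableSet κ)]
  exact IntegrableOn.of_finite (Set.finite_range a)

variable [DiscreteMeasurableSpace ι] (κ : Measure ι) [IsProbabilityMeasure κ]
  [NormedAddCommGroup E]

lemma map_mem_p2_of_finite [MeasurableSingletonClass E] (a : ι → E) : κ.map a ∈ P2 :=
  ⟨Measure.isProbabilityMeasure_map .of_discrete, integrable_map_of_finite κ a _⟩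

variable [InnerProductSpace ℝ E] [BorelSpace E] [SecondCountableTopology E] [LinearOrder ι]
  {m : ι → ℝ} {θ : E} {b : ι → E} {T : E → E}

theorem optPlan_map_smul_eq_graph (hm : StrictMono m) (hb : StrictMono fun i => (⟪θ, b i⟫ : ℝ))
    (hT : Measurable T) (hTb : T ∘ (fun i => m i • θ) = b) :
    OptPlan (κ.map fun i => m i • θ) (κ.map b) =
      {(κ.map fun i => m i • θ).map fun x => (x, T x)} := by
  obtain ⟨G, hG⟩ := exists_strict_subgradient_of_strictMono hm hb
  have hν : (κ.map fun i => m i • θ).map T = κ.map b := by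
    rw [Measure.map_map hT .of_discrete, hTb]
  rw [← hν]
  refine optPlan_eq_graph_of_strict_subgradient (G := fun y => G ⟪θ, y⟫) (B := Set.range b)
    (map_mem_p2_of_finite κ _) hT (hν ▸ map_mem_p2_of_finite κ b)
    (hν ▸ integrable_map_of_finite κ b _)
    (hν ▸ ae_map_mem_range b (Set.finite_range b).measurableSet κ) ?_
  filter_upwards [ae_map_mem_range (fun i => m i • θ) (Set.finite_range _).measurableSet κ]
  rintro _ ⟨i, rfl⟩ _ ⟨j, rfl⟩ hne
  have hTi : T (m i • θ) = b i := congrFun hTb i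
  rw [hTi] at hne ⊢
  rw [real_inner_smul_left, inner_sub_right]
  exact hG i j fun hij => hne (congrArg b hij.symm)

theorem wnusq_map_smul (hm : StrictMono m) {x y : ι → E}
    (hx : StrictMono fun i => (⟪θ, x i⟫ : ℝ)) (hy : StrictMono fun i => (⟪θ, y i⟫ : ℝ)) :
    Wnusq (κ.map fun i => m i • θ) (κ.map x) (κ.map y) = ∫ i, ‖x i - y i‖ ^ 2 ∂κ := by
  have hpivot : MeasurableEmbedding fun i => m i • θ :=
    Measurable.measurableEmbedding .of_discrete
      (injective_smul_of_injective_inner hm.injective hx.injective)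
  obtain ⟨T₁, hT₁, hTx⟩ := hpivot.exists_measurable_extend (g := x) .of_discrete fun _ => ⟨0⟩
  obtain ⟨T₂, hT₂, hTy⟩ := hpivot.exists_measurable_extend (g := y) .of_discrete fun _ => ⟨0⟩
  have := Measure.isProbabilityMeasure_map (μ := κ) hpivot.measurable.aemeasurable
  rw [wnusq_eq_integral_of_optPlan_eq_graph hT₁ hT₂ (optPlan_map_smul_eq_graph κ hm hx hT₁ hTx)
    (optPlan_map_smul_eq_graph κ hm hy hT₂ hTy), hpivot.integral_map, ← hTx, ← hTy]
  rfl

end FiniteSupport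

section Uniform

lemma uniformOn_univ_eq_sum_dirac (ι : Type*) [Fintype ι] [MeasurableSpace ι]
    [MeasurableSingletonClass ι] :
    uniformOn (Set.univ : Set ι) = (Fintype.card ι : ℝ≥0∞)⁻¹ • ∑ i, Measure.dirac i := by
  rw [uniformOn, ProbabilityTheory.cond, Measure.restrict_univ, Measure.count_univ, Measure.count,
    Measure.sum_fintype, ENat.card_eq_coe_fintype_card, ENat.toENNReal_coe]

lemma integral_uniformOn_univ {ι : Type*} [Fintype ι] [MeasurableSpace ι]
    [MeasurableSingletonClass ι] (f : ι → ℝ) :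
    ∫ i, f i ∂uniformOn Set.univ = (1 / (Fintype.card ι : ℝ)) * ∑ i, f i := by
  rw [uniformOn_univ_eq_sum_dirac, integral_smul_measure,
    integral_finsetSum_measure fun _ _ => .of_finite]
  simp

lemma empMeasure_eq_map_uniformOn {d n : ℕ} (x : Fin n → Euc d) :
    empMeasure x = (uniformOn Set.univ).map x := by
  rw [uniformOn_univ_eq_sum_dirac, Measure.map_smul, Measure.map_finset_sum .of_discrete,
    empMeasure, Fintype.card_fin]
  simp only [Measure.map_dirac]

lemma empMeasure_comp_perm {d n : ℕ} (x : Fin n → Euc d) (σ : Equiv.Perm (Fin n)) :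
    empMeasure (fun i => x (σ i)) = empMeasure x := by
  rw [empMeasure, empMeasure, Equiv.sum_comp σ fun i => Measure.dirac (x i)]

lemma map_uniformOn_Iic {n : ℕ} (u : Fin n → ℝ) (s : ℝ) :
    (uniformOn Set.univ).map u (Set.Iic s) = (Finset.univ.filter fun i => u i ≤ s).card / n := by
  rw [Measure.map_apply .of_discrete measurableSet_Iic, uniformOn_univ, Fintype.card_fin,
    ← Measure.count_apply_finset]
  congr 2
  ext
  simp

/-- The index `k : Fin n` of the interval `(k / n, (k + 1) / n]` of the uniform partition of
`(0, 1]` which contains `t`; it only matters for `t ∈ (0, 1]`. -/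
def gridIndex (n : ℕ) [NeZero n] (t : ℝ) : Fin n :=
  Fin.ofNat n (⌈n * t⌉₊ - 1)

variable {n : ℕ} [NeZero n]

lemma measurable_gridIndex : Measurable (gridIndex n) :=
  (Measurable.of_discrete (f := fun k => Fin.ofNat n (k - 1))).comp
    (Nat.measurable_ceil.comp (measurable_const_mul (n : ℝ)))

lemma gridIndex_val_add_one {t : ℝ} (ht : t ∈ Set.Ioc (0 : ℝ) 1) :
    (gridIndex n t : ℕ) + 1 = ⌈n * t⌉₊ := by
  have hn : (0 : ℝ) < n := Nat.cast_pos.2 (NeZero.pos n)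
  have hpos : 0 < ⌈n * t⌉₊ := Nat.ceil_pos.2 (mul_pos hn ht.1)
  have hle : ⌈n * t⌉₊ ≤ n := Nat.ceil_le.2 (mul_le_of_le_one_right hn.le ht.2)
  rw [gridIndex, Fin.val_ofNat, Nat.mod_eq_of_lt (by lia), Nat.sub_add_cancel hpos]

lemma gridIndex_preimage_inter_Ioc (k : Fin n) :
    gridIndex n ⁻¹' {k} ∩ Set.Ioc 0 1 = Set.Ioc ((k : ℝ) / n) ((k + 1) / n) := by
  have hn : (0 : ℝ) < n := Nat.cast_pos.2 (NeZero.pos n)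
  have hk : (k : ℝ) + 1 ≤ n := mod_cast k.isLt
  have hceil : ∀ t : ℝ, ⌈n * t⌉₊ = (k : ℕ) + 1 ↔ t ∈ Set.Ioc ((k : ℝ) / n) ((k + 1) / n) := by
    intro t
    rw [Nat.ceil_eq_iff (Nat.succ_ne_zero _), Set.mem_Ioc, div_lt_iff₀' hn, le_div_iff₀' hn]
    simp
  have hsub : Set.Ioc ((k : ℝ) / n) ((k + 1) / n) ⊆ Set.Ioc 0 1 :=
    Set.Ioc_subset_Ioc (by positivity) ((div_le_one hn).2 hk)
  ext t
  rw [Set.mem_inter_iff, Set.mem_preimage, Set.mem_singleton_iff, ← hceil, Fin.ext_iff]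
  constructor
  · rintro ⟨ht, ht01⟩
    rw [← gridIndex_val_add_one ht01, ht]
  · intro ht
    have ht01 := hsub ((hceil t).1 ht)
    exact ⟨by have := gridIndex_val_add_one (n := n) ht01; lia, ht01⟩

theorem map_gridIndex_volume_Ioc :
    (volume.restrict (Set.Ioc (0 : ℝ) 1)).map (gridIndex n) = uniformOn Set.univ := by
  refine Measure.ext_of_singleton fun k => ?_
  have hlength : ((k : ℝ) + 1) / n - k / n = (n : ℝ)⁻¹ := by ring
  rw [Measure.map_apply measurable_gridIndex (measurableSet_singleton k),
    Measure.restrict_apply (measurable_gridIndex (measurableSet_singleton k)),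
    gridIndex_preimage_inter_Ioc, Real.volume_Ioc, hlength, uniformOn_univ,
    Measure.count_singleton, Fintype.card_fin, one_div,
    ENNReal.ofReal_inv_of_pos (Nat.cast_pos.2 (NeZero.pos n)), ENNReal.ofReal_natCast]

theorem quantile_map_uniformOn {u : Fin n → ℝ} (hu : Monotone u) {t : ℝ}
    (ht : t ∈ Set.Ioc (0 : ℝ) 1) :
    quantile ((uniformOn Set.univ).map u) t = u (gridIndex n t) := by
  have hn : (0 : ℝ) < n := Nat.cast_pos.2 (NeZero.pos n)
  suffices {s | ENNReal.ofReal t ≤ (uniformOn Set.univ).map u (Set.Iic s)} =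
      Set.Ici (u (gridIndex n t)) by rw [quantile, this, csInf_Ici]
  ext s
  rw [Set.mem_ofPred_eq, Set.mem_Ici, ← Tuple.lt_card_le_iff_apply_le_of_monotone hu,
    ← Nat.add_one_le_iff, gridIndex_val_add_one ht, Nat.ceil_le, map_uniformOn_Iic,
    ← le_div_iff₀' hn, ← ENNReal.ofReal_natCast n, ← ENNReal.ofReal_natCast,
    ← ENNReal.ofReal_div_of_pos hn, ENNReal.ofReal_le_ofReal_iff (by positivity)]

lemma projLine_empMeasure {d n : ℕ} (θ : Euc d) (x : Fin n → Euc d) :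
    projLine θ (empMeasure x) = (uniformOn Set.univ).map fun i => (⟪θ, x i⟫ : ℝ) := by
  rw [projLine, empMeasure_eq_map_uniformOn, Measure.map_map (by fun_prop) .of_discrete]
  rfl

theorem pivotMiddle_empMeasure {d : ℕ} {θ : Euc d} {x y : Fin n → Euc d}
    (hx : Monotone fun i => (⟪θ, x i⟫ : ℝ)) (hy : Monotone fun i => (⟪θ, y i⟫ : ℝ)) :
    pivotMiddle θ (empMeasure x) (empMeasure y) = (uniformOn Set.univ).map fun i =>
      ((1 / 2) * (⟪θ, x i⟫ : ℝ) + (1 / 2) * (⟪θ, y i⟫ : ℝ)) • θ := by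
  rw [← map_gridIndex_volume_Ioc, Measure.map_map .of_discrete measurable_gridIndex, pivotMiddle,
    Measure.restrict_congr_set Ioc_ae_eq_Icc.symm]
  refine Measure.map_congr ((ae_restrict_iff' measurableSet_Ioc).2 (ae_of_all _ fun t ht => ?_))
  simp only [projLine_empMeasure, quantile_map_uniformOn hx ht, quantile_map_uniformOn hy ht,
    Function.comp_apply]

end Uniform

theorem PSsq_point_clouds_nonambiguous_general {d n : ℕ} (hn : 0 < n)
    (x y : Fin n → Euc d) (θ : Euc d) (σ τ : Equiv.Perm (Fin n))
    (hσ : StrictMono fun i => (⟪θ, x (σ i)⟫ : ℝ))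
    (hτ : StrictMono fun i => (⟪θ, y (τ i)⟫ : ℝ)) :
    PSsq θ (empMeasure x) (empMeasure y)
      = (1 / (n : ℝ)) * ∑ i, ‖x (σ i) - y (τ i)‖ ^ 2 := by
  have : NeZero n := .of_pos hn
  have : IsProbabilityMeasure (uniformOn (Set.univ : Set (Fin n))) :=
    isProbabilityMeasure_uniformOn Set.finite_univ Set.univ_nonempty
  have hpivot : StrictMono fun i =>
      (1 / 2) * (⟪θ, x (σ i)⟫ : ℝ) + (1 / 2) * (⟪θ, y (τ i)⟫ : ℝ) :=
    (hσ.const_mul one_half_pos).add (hτ.const_mul one_half_pos)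
  rw [PSsq, ← empMeasure_comp_perm x σ, ← empMeasure_comp_perm y τ,
    pivotMiddle_empMeasure hσ.monotone hτ.monotone, empMeasure_eq_map_uniformOn,
    empMeasure_eq_map_uniformOn, wnusq_map_smul _ hpivot hσ hτ, integral_uniformOn_univ,
    Fintype.card_fin]

/-- for point clouds with injective projections, `PS_θ²` is given by the
sorting permutations. -/
theorem PSsq_point_clouds_nonambiguous {d n : ℕ} (hn : 0 < n)
    (x y : Fin n → Euc d) (θ : Euc d) (hθ : ‖θ‖ = 1)
    (hx : Function.Injective fun i => (⟪θ, x i⟫ : ℝ))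
    (hy : Function.Injective fun i => (⟪θ, y i⟫ : ℝ))
    (σ τ : Equiv.Perm (Fin n))
    (hσ : StrictMono fun i => (⟪θ, x (σ i)⟫ : ℝ))
    (hτ : StrictMono fun i => (⟪θ, y (τ i)⟫ : ℝ)) :
    PSsq θ (empMeasure x) (empMeasure y)
      = (1 / (n : ℝ)) * ∑ i, ‖x (σ i) - y (τ i)‖ ^ 2 :=
  PSsq_point_clouds_nonambiguous_general hn x y θ σ τ hσ hτ

end
end

section
/- Let X = (x_1,…,x_n), Y = (y_1,…,y_n) ∈ (ℝ^d)^n and θ ∈ S^{d−1} satisfy P_θ x_1 ≤ … ≤ P_θ x_n and P_θ y_1 ≤ … ≤ P_θ y_n. Then the set of extreme points of the convex set U ∩ P_θ(X,Y) equals { P^{σ,τ} : (σ,τ) ∈ Perm_θ(X,Y) }, where P^{σ,τ} is the matrix with entries P^{σ,τ}_{ij} = (1/n)·1(σ(i) = τ(j)). -/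
open MeasureTheory Filter Topology ProbabilityTheory
open scoped ENNReal RealInnerProductSpace Classical

noncomputable section

def Umat (n : ℕ) : Set (Matrix (Fin n) (Fin n) ℝ) :=
  {P | (∀ i j, 0 ≤ P i j) ∧ (∀ i, ∑ j, P i j = 1 / n) ∧ (∀ j, ∑ i, P i j = 1 / n)}

def PthetaSet {d n : ℕ} (θ : Euc d) (x y : Fin n → Euc d) :
    Set (Matrix (Fin n) (Fin n) ℝ) :=
  {P | ∀ s t : ℝ,
    ∑ i ∈ Finset.univ.filter (fun i => (⟪θ, x i⟫ : ℝ) = s),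
      ∑ j ∈ Finset.univ.filter (fun j => (⟪θ, y j⟫ : ℝ) = t), P i j
      = ((Finset.univ.filter
          (fun k => (⟪θ, x k⟫ : ℝ) = s ∧ (⟪θ, y k⟫ : ℝ) = t)).card : ℝ) / n}

/-- Extreme points of a convex set: points that cannot be written as the midpoint of two
distinct points of the set. -/
def ExtrPts {M : Type*} [AddCommMonoid M] [Module ℝ M] (C : Set M) : Set M :=
  {c | c ∈ C ∧ ∀ a ∈ C, ∀ b ∈ C, c = (1 / 2 : ℝ) • a + (1 / 2 : ℝ) • b → a = b}

/-- Pairs of permutations sorting the projections of `X` and `Y`. -/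
def PermTheta {d n : ℕ} (θ : Euc d) (x y : Fin n → Euc d) :
    Set (Equiv.Perm (Fin n) × Equiv.Perm (Fin n)) :=
  {p | Monotone (fun i => (⟪θ, x (p.1 i)⟫ : ℝ)) ∧ Monotone (fun i => (⟪θ, y (p.2 i)⟫ : ℝ))}

/-- The permutation matrix `P^{σ,τ}` with entries `(1/n)·1(σ(i) = τ(j))`. -/
def permMat (n : ℕ) (σ τ : Equiv.Perm (Fin n)) : Matrix (Fin n) (Fin n) ℝ :=
  fun i j => if σ i = τ j then 1 / n else 0

/-!
Write `u` and `v` for the two families of projections. As both are monotone, the pairs `(u k, v k)`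
form a chain, so if every position `(i, π i)` of a permutation `π` lies in a block charged by the
diagonal, then `u` and `v ∘ π` are sorted by a common permutation. This writes `π` as `τ⁻¹ * σ` with
`σ` preserving `u` and `τ` preserving `v`. By Birkhoff's theorem a matrix of `U ∩ P_θ(X, Y)` is a
convex combination of permutation matrices supported where it is nonzero, hence of matrices
`P^{σ,τ}`. The polytope is thus the convex hull of the `P^{σ,τ}`, each of which is already extreme
in `U`.
-/

theorem extremePoints_subset_extrPts {E : Type*} [AddCommMonoid E] [Module ℝ E] {C : Set E} :
    C.extremePoints ℝ ⊆ ExtrPts C := by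
  refine fun c hc => ⟨hc.1, fun a ha b hb hab => ?_⟩
  have hseg : c ∈ openSegment ℝ a b :=
    ⟨1 / 2, 1 / 2, by norm_num, by norm_num, by norm_num, hab.symm⟩
  obtain ⟨rfl, rfl⟩ := (mem_extremePoints.1 hc).2 a ha b hb hseg
  rfl

theorem extrPts_eq_extremePoints {E : Type*} [AddCommGroup E] [Module ℝ E] {C : Set E}
    (hC : Convex ℝ C) : ExtrPts C = C.extremePoints ℝ := by
  refine Set.Subset.antisymm (fun c hc => ⟨hc.1, ?_⟩) extremePoints_subset_extrPts
  rintro y hy z hz ⟨a, b, ha, hb, hab, rfl⟩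
  -- `c ± ε • (y - z)` with `ε = min a b` still lie on the segment `[y, z]` and have midpoint `c`.
  set ε := min a b
  have hεa : ε ≤ a := min_le_left a b
  have hεb : ε ≤ b := min_le_right a b
  have hε_pos : 0 < ε := lt_min ha hb
  have hplus : (a + ε) • y + (b - ε) • z ∈ C :=
    hC hy hz (by linarith) (by linarith) (by linarith)
  have hminus : (a - ε) • y + (b + ε) • z ∈ C :=
    hC hy hz (by linarith) (by linarith) (by linarith)
  have heq := hc.2 _ hplus _ hminus (by module)
  have hsmul : (2 * ε) • (y - z) = 0 := by
    rw [← sub_eq_zero] at heq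
    rw [← heq]
    module
  have hyz : y = z := by
    simpa [hε_pos.ne', sub_eq_zero] using hsmul
  rw [hyz, ← add_smul, hab, one_smul]

open scoped Pointwise in
theorem extremePoints_smul {𝕜 E : Type*} [Field 𝕜] [PartialOrder 𝕜] [IsOrderedRing 𝕜]
    [AddCommGroup E] [Module 𝕜 E] {a : 𝕜} (ha : a ≠ 0) (s : Set E) :
    (a • s).extremePoints 𝕜 = a • s.extremePoints 𝕜 :=
  (image_extremePoints (LinearEquiv.smulOfNeZero 𝕜 E a ha) s).symm

theorem mem_convexHull_supported_permMatrix_of_mem_doublyStochastic {R ι : Type*} [Field R]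
    [LinearOrder R] [IsStrictOrderedRing R] [Fintype ι] [DecidableEq ι] {M : Matrix ι ι R}
    (hM : M ∈ doublyStochastic R ι) :
    M ∈ convexHull R ((fun π : Equiv.Perm ι => π.permMatrix R) '' {π | ∀ i, M i (π i) ≠ 0}) := by
  obtain ⟨w, hw_nonneg, hw_sum, rfl⟩ := exists_eq_sum_perm_of_mem_doublyStochastic hM
  rw [← finsum_eq_sum_of_fintype] at hw_sum ⊢
  refine (convex_convexHull R _).finsum_mem hw_nonneg hw_sum fun π hπ => ?_
  refine subset_convexHull R _ ⟨π, fun i => ne_of_gt ?_, rfl⟩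
  rw [finsum_eq_sum_of_fintype, Matrix.sum_apply]
  have hterm : ∀ ρ : Equiv.Perm ι, 0 ≤ (w ρ • ρ.permMatrix R) i (π i) := fun ρ =>
    mul_nonneg (hw_nonneg ρ) (nonneg_of_mem_doublyStochastic permMatrix_mem_doublyStochastic)
  refine Finset.sum_pos' (fun ρ _ => hterm ρ) ⟨π, Finset.mem_univ π, ?_⟩
  simpa using (hw_nonneg π).lt_of_ne' hπ

open scoped Finset in
theorem sum_filter_permMatrix {R ι : Type*} [AddCommMonoidWithOne R] [Fintype ι] [DecidableEq ι]
    (π : Equiv.Perm ι) (p q : ι → Prop) [DecidablePred p] [DecidablePred q] :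
    ∑ i with p i, ∑ j with q j, π.permMatrix R i j = #{i | p i ∧ q (π i)} := by
  simp [PEquiv.toMatrix_apply, ← Finset.filter_filter]

section Sorting

variable {n : ℕ} {α β : Type*}

theorem apply_perm_of_monotone [PartialOrder α] {u : Fin n → α} {σ : Equiv.Perm (Fin n)}
    (hu : Monotone u) (hσ : Monotone (u ∘ σ)) (i : Fin n) : u (σ i) = u i :=
  congrFun (Tuple.unique_monotone (τ := 1) hσ hu) i

theorem exists_perm_monotone_comp_of_monovary [LinearOrder α] [LinearOrder β] {f : Fin n → α}
    {g : Fin n → β} (hfg : Monovary f g) :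
    ∃ s : Equiv.Perm (Fin n), Monotone (f ∘ s) ∧ Monotone (g ∘ s) := by
  let key : Fin n → β ×ₗ α := fun i => toLex (g i, f i)
  have hlex : ∀ {i j}, i ≤ j → g (Tuple.sort key i) < g (Tuple.sort key j) ∨
      g (Tuple.sort key i) = g (Tuple.sort key j) ∧
        f (Tuple.sort key i) ≤ f (Tuple.sort key j) := fun hij =>
    Prod.Lex.toLex_le_toLex.1 (Tuple.monotone_sort key hij)
  refine ⟨Tuple.sort key, fun i j hij => ?_, fun i j hij => ?_⟩
  · exact (hlex hij).elim (fun hlt => hfg hlt) And.right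
  · exact (hlex hij).elim le_of_lt fun h => h.1.le

theorem monovary_of_forall_exists_eq {ι κ : Type*} [LinearOrder ι] [Preorder α] [Preorder β]
    {u : ι → α} {v : ι → β} (hu : Monotone u) (hv : Monotone v) {f : κ → α} {g : κ → β}
    (h : ∀ i, ∃ k, u k = f i ∧ v k = g i) : Monovary f g := by
  intro i j hij
  obtain ⟨k, hku, hkv⟩ := h i
  obtain ⟨l, hlu, hlv⟩ := h j
  rw [← hku, ← hlu]
  rw [← hkv, ← hlv] at hij
  exact hu.monovary hv hij

theorem exists_monotone_comp_inv_mul_eq [LinearOrder α] [LinearOrder β] {u : Fin n → α}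
    {v : Fin n → β} (hu : Monotone u) (hv : Monotone v) {π : Equiv.Perm (Fin n)}
    (hπ : Monovary u (v ∘ π)) :
    ∃ σ τ : Equiv.Perm (Fin n), Monotone (u ∘ σ) ∧ Monotone (v ∘ τ) ∧ τ⁻¹ * σ = π := by
  obtain ⟨s, hus, hvs⟩ := exists_perm_monotone_comp_of_monovary hπ
  have hu_inv : u ∘ ⇑s⁻¹ = u := by
    ext i
    simpa using (apply_perm_of_monotone hu hus (s⁻¹ i)).symm
  have hv_inv : v ∘ ⇑(π * s)⁻¹ = v := by
    ext i
    simpa using (apply_perm_of_monotone (σ := π * s) hv hvs ((π * s)⁻¹ i)).symm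
  exact ⟨s⁻¹, (π * s)⁻¹, hu_inv.symm ▸ hu, hv_inv.symm ▸ hv, by group⟩

end Sorting

section ScaledBirkhoff

open scoped Pointwise

variable {n : ℕ}

theorem Umat_eq_smul_doublyStochastic :
    Umat n = (1 / n : ℝ) • (doublyStochastic ℝ (Fin n) : Set (Matrix (Fin n) (Fin n) ℝ)) := by
  ext P
  have hn : (0 : ℝ) ≤ 1 / n := by positivity
  rw [Set.mem_smul_set]
  simp only [eq_comm (b := P), SetLike.mem_coe, exists_mem_doublyStochastic_eq_smul_iff hn]
  rfl

theorem convex_Umat : Convex ℝ (Umat n) := by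
  rw [Umat_eq_smul_doublyStochastic]
  exact convex_doublyStochastic.smul _

theorem permMat_eq_smul_permMatrix (σ τ : Equiv.Perm (Fin n)) :
    permMat n σ τ = (1 / n : ℝ) • (τ⁻¹ * σ).permMatrix ℝ := by
  ext i j
  simp [permMat, -Matrix.permMatrix_mul, PEquiv.toMatrix_apply, Equiv.symm_apply_eq]

theorem permMat_mem_extremePoints_Umat (σ τ : Equiv.Perm (Fin n)) :
    permMat n σ τ ∈ (Umat n).extremePoints ℝ := by
  rw [Umat_eq_smul_doublyStochastic, permMat_eq_smul_permMatrix]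
  rcases eq_or_ne n 0 with rfl | hn
  · rw [Set.extremePoints_eq_self]
    exact Set.smul_mem_smul_set permMatrix_mem_doublyStochastic
  · rw [extremePoints_smul (one_div_ne_zero (Nat.cast_ne_zero.2 hn)),
      extremePoints_doublyStochastic]
    exact Set.smul_mem_smul_set ⟨τ⁻¹ * σ, rfl⟩

theorem mem_convexHull_supported_smul_permMatrix_of_mem_Umat {P : Matrix (Fin n) (Fin n) ℝ}
    (hP : P ∈ Umat n) :
    P ∈ convexHull ℝ
      ((fun π : Equiv.Perm (Fin n) => (1 / n : ℝ) • π.permMatrix ℝ) ''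
        {π | ∀ i, P i (π i) ≠ 0}) := by
  rw [Umat_eq_smul_doublyStochastic] at hP
  obtain ⟨M, hM, rfl⟩ := hP
  have hM_hull := Set.smul_mem_smul_set (a := (1 / n : ℝ))
    (mem_convexHull_supported_permMatrix_of_mem_doublyStochastic hM)
  rw [← convexHull_smul, ← Set.image_smul, Set.image_image] at hM_hull
  refine convexHull_mono (Set.image_mono fun π hπ i => ?_) hM_hull
  have hn : (n : ℝ) ≠ 0 := Nat.cast_ne_zero.2 i.pos.ne'
  exact mul_ne_zero (one_div_ne_zero hn) (hπ i)

end ScaledBirkhoff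

section BlockMass

open scoped Finset

variable {n : ℕ} {α β : Type*}

/-- The set `P_θ(X, Y)` with arbitrary labels `u`, `v` in place of the projections of `X` and `Y`:
the matrices giving every block `u⁻¹(a) × v⁻¹(b)` the mass it has under `1/n` times the identity
matrix. -/
def blockMassSet [DecidableEq α] [DecidableEq β] (u : Fin n → α) (v : Fin n → β) :
    Set (Matrix (Fin n) (Fin n) ℝ) :=
  {P | ∀ a b, ∑ i with u i = a, ∑ j with v j = b, P i j = (#{k | u k = a ∧ v k = b} : ℝ) / n}

/-- The matrices `P^{σ,τ}` for which `σ` sorts `u` and `τ` sorts `v`. For `u`, `v` the projections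
of `X`, `Y` these are the `P^{σ,τ}` with `(σ, τ)` in `Perm_θ(X, Y)`. -/
def sortingPermMats [Preorder α] [Preorder β] (u : Fin n → α) (v : Fin n → β) :
    Set (Matrix (Fin n) (Fin n) ℝ) :=
  {P | ∃ p : Equiv.Perm (Fin n) × Equiv.Perm (Fin n),
    (Monotone (u ∘ p.1) ∧ Monotone (v ∘ p.2)) ∧ P = permMat n p.1 p.2}

theorem convex_blockMassSet [DecidableEq α] [DecidableEq β] (u : Fin n → α) (v : Fin n → β) :
    Convex ℝ (blockMassSet u v) := by
  intro P hP Q hQ c d _ _ hcd a b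
  simp only [Matrix.add_apply, Matrix.smul_apply, smul_eq_mul, Finset.sum_add_distrib,
    ← Finset.mul_sum, hP a b, hQ a b, ← add_mul, hcd, one_mul]

theorem exists_eq_and_eq_of_mem_blockMassSet [DecidableEq α] [DecidableEq β] {u : Fin n → α}
    {v : Fin n → β} {P : Matrix (Fin n) (Fin n) ℝ} (hP_nonneg : ∀ i j, 0 ≤ P i j)
    (hP : P ∈ blockMassSet u v) {i j : Fin n} (hij : P i j ≠ 0) :
    ∃ k, u k = u i ∧ v k = v j := by
  have hrow : ∀ i', 0 ≤ ∑ j' with v j' = v j, P i' j' := fun i' =>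
    Finset.sum_nonneg fun j' _ => hP_nonneg i' j'
  have hrow_pos : 0 < ∑ j' with v j' = v j, P i j' :=
    Finset.sum_pos' (fun j' _ => hP_nonneg i j') ⟨j, by simp, (hP_nonneg i j).lt_of_ne' hij⟩
  have hblock_pos : 0 < ∑ i' with u i' = u i, ∑ j' with v j' = v j, P i' j' :=
    Finset.sum_pos' (fun i' _ => hrow i') ⟨i, by simp, hrow_pos⟩
  rw [hP (u i) (v j)] at hblock_pos
  by_contra! hempty
  rw [Finset.filter_eq_empty_iff.2 fun k _ hk => hempty k hk.1 hk.2] at hblock_pos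
  simp at hblock_pos

theorem permMat_mem_blockMassSet [PartialOrder α] [PartialOrder β] [DecidableEq α]
    [DecidableEq β] {u : Fin n → α} {v : Fin n → β} (hu : Monotone u) (hv : Monotone v)
    {σ τ : Equiv.Perm (Fin n)} (hσ : Monotone (u ∘ σ)) (hτ : Monotone (v ∘ τ)) :
    permMat n σ τ ∈ blockMassSet u v := by
  intro a b
  have hv_inv : ∀ i, v (τ.symm (σ i)) = v (σ i) := fun i => by
    simpa using (apply_perm_of_monotone hv hτ (τ.symm (σ i))).symm
  have hcard : #{i | u i = a ∧ v ((τ⁻¹ * σ) i) = b} = #{k | u k = a ∧ v k = b} :=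
    Finset.card_equiv σ fun i => by
      rw [Finset.mem_filter, Finset.mem_filter]
      simp [hv_inv, apply_perm_of_monotone hu hσ]
  simp only [permMat_eq_smul_permMatrix, Matrix.smul_apply, smul_eq_mul, ← Finset.mul_sum,
    sum_filter_permMatrix, hcard]
  ring

theorem smul_permMatrix_mem_sortingPermMats [LinearOrder α] [LinearOrder β] {u : Fin n → α}
    {v : Fin n → β} (hu : Monotone u) (hv : Monotone v) {π : Equiv.Perm (Fin n)}
    (hπ : Monovary u (v ∘ π)) : (1 / n : ℝ) • π.permMatrix ℝ ∈ sortingPermMats u v := by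
  obtain ⟨σ, τ, hσ, hτ, rfl⟩ := exists_monotone_comp_inv_mul_eq hu hv hπ
  exact ⟨(σ, τ), ⟨hσ, hτ⟩, (permMat_eq_smul_permMatrix σ τ).symm⟩

theorem Umat_inter_blockMassSet_eq_convexHull [LinearOrder α] [LinearOrder β] {u : Fin n → α}
    {v : Fin n → β} (hu : Monotone u) (hv : Monotone v) :
    Umat n ∩ blockMassSet u v = convexHull ℝ (sortingPermMats u v) := by
  apply Set.Subset.antisymm
  · rintro P ⟨hPU, hPB⟩
    refine convexHull_mono ?_ (mem_convexHull_supported_smul_permMatrix_of_mem_Umat hPU)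
    rintro _ ⟨π, hπ, rfl⟩
    exact smul_permMatrix_mem_sortingPermMats hu hv <| monovary_of_forall_exists_eq hu hv
      fun i => exists_eq_and_eq_of_mem_blockMassSet hPU.1 hPB (hπ i)
  · refine convexHull_min ?_ (convex_Umat.inter (convex_blockMassSet u v))
    rintro _ ⟨⟨σ, τ⟩, ⟨hσ, hτ⟩, rfl⟩
    exact ⟨(permMat_mem_extremePoints_Umat σ τ).1, permMat_mem_blockMassSet hu hv hσ hτ⟩

theorem extreme_points_U_cap_Ptheta_general [LinearOrder α] [LinearOrder β] {u : Fin n → α}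
    {v : Fin n → β} (hu : Monotone u) (hv : Monotone v) :
    ExtrPts (Umat n ∩ blockMassSet u v) = sortingPermMats u v := by
  have hhull := Umat_inter_blockMassSet_eq_convexHull hu hv
  rw [extrPts_eq_extremePoints (convex_Umat.inter (convex_blockMassSet u v))]
  apply Set.Subset.antisymm
  · rw [hhull]
    exact extremePoints_convexHull_subset
  · rintro P hP
    have hmem : P ∈ Umat n ∩ blockMassSet u v := hhull ▸ subset_convexHull ℝ _ hP
    obtain ⟨⟨σ, τ⟩, -, rfl⟩ := hP
    exact inter_extremePoints_subset_extremePoints_of_subset Set.inter_subset_left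
      ⟨hmem, permMat_mem_extremePoints_Umat σ τ⟩

end BlockMass

/-- constrained Birkhoff–von Neumann theorem: the extreme points of
`U ∩ P_θ(X, Y)` are exactly the permutation matrices `P^{σ,τ}` for
`(σ, τ) ∈ Perm_θ(X, Y)`. -/
theorem extreme_points_U_cap_Ptheta {d n : ℕ}
    (x y : Fin n → Euc d) (θ : Euc d) (hθ : ‖θ‖ = 1)
    (hx : Monotone fun i => (⟪θ, x i⟫ : ℝ)) (hy : Monotone fun i => (⟪θ, y i⟫ : ℝ)) :
    ExtrPts (Umat n ∩ PthetaSet θ x y)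
      = {P | ∃ p ∈ PermTheta θ x y, P = permMat n p.1 p.2} :=
  extreme_points_U_cap_Ptheta_general hx hy

end
end

section
/- Let X = (x_1,…,x_n), Y = (y_1,…,y_n) ∈ (ℝ^d)^n and θ ∈ S^{d−1}. Then CW_θ²((1/n)Σ_i δ_{x_i}, (1/n)Σ_j δ_{y_j}) = min over (σ,τ) ∈ Perm_θ(X,Y) of (1/n) Σ_{i=1}^n ‖x_{σ(i)} − y_{τ(i)}‖². -/
open MeasureTheory Filter Topology ProbabilityTheory
open scoped ENNReal RealInnerProductSpace Classical

noncomputable section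

/-! Spreading the mass of each atom of a coupling `ω` of two empirical measures evenly over the
indices of its coordinates turns `ω` into a doubly stochastic matrix, in which the cost is linear.
By Birkhoff's theorem there is therefore a permutation `σ` that costs at most as much as `ω` and
only matches pairs `(x i, y (σ i))` which are atoms of `ω`. If `ω` projects to the comonotone plan,
then so do its atoms, hence larger projections of `x i` go with larger projections of `y (σ i)`:
sorting the pairs of projections lexicographically sorts both clouds at once, and `σ` is the
matching of a sorting pair. Conversely the matching of a sorting pair projects to the comonotone
plan, because the quantile function of `n` sorted points equals the `k`-th one (counted from `0`)
on `(k / n, (k + 1) / n]`. -/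

section Combinatorics

/-- The pairs `(σ, τ)` of permutations sorting the families `a` and `b` respectively; `PermTheta`
is the case where `a` and `b` are the projections of two point clouds. -/
def sortingPairs {α β : Type*} [Preorder α] [Preorder β] {n : ℕ} (a : Fin n → α) (b : Fin n → β) :
    Set (Equiv.Perm (Fin n) × Equiv.Perm (Fin n)) :=
  {p | Monotone (fun i => a (p.1 i)) ∧ Monotone (fun i => b (p.2 i))}

lemma sortingPairs_nonempty {α β : Type*} [LinearOrder α] [LinearOrder β] {n : ℕ}
    (a : Fin n → α) (b : Fin n → β) : (sortingPairs a b).Nonempty :=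
  ⟨(Tuple.sort a, Tuple.sort b), Tuple.monotone_sort a, Tuple.monotone_sort b⟩

lemma exists_mem_sortingPairs_of_monovary {α β : Type*} [LinearOrder α] [LinearOrder β] {n : ℕ}
    {a : Fin n → α} {b : Fin n → β} {σ : Equiv.Perm (Fin n)} (h : Monovary (b ∘ σ) a) :
    ∃ τ : Equiv.Perm (Fin n), (τ, σ * τ) ∈ sortingPairs a b := by
  let lex : Fin n → α ×ₗ β := fun i => toLex (a i, b (σ i))
  have lex_le {i j : Fin n} (hij : i ≤ j) :
      a (Tuple.sort lex i) < a (Tuple.sort lex j) ∨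
        a (Tuple.sort lex i) = a (Tuple.sort lex j) ∧
          b (σ (Tuple.sort lex i)) ≤ b (σ (Tuple.sort lex j)) :=
    Prod.Lex.toLex_le_toLex.1 (Tuple.monotone_sort lex hij)
  refine ⟨Tuple.sort lex, fun i j hij => ?_, fun i j hij => ?_⟩
  · exact (lex_le hij).elim le_of_lt fun heq => heq.1.le
  · exact (lex_le hij).elim (fun hlt => h hlt) And.right

lemma sum_sum_permMatrix_mul {R ι : Type*} [NonAssocSemiring R] [Fintype ι] [DecidableEq ι]
    (σ : Equiv.Perm ι) (C : ι → ι → R) :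
    ∑ i, ∑ j, σ.permMatrix R i j * C i j = ∑ i, C i (σ i) := by
  simp [Equiv.Perm.permMatrix, PEquiv.toMatrix_apply, Equiv.toPEquiv_apply, eq_comm]

lemma exists_perm_sum_le_of_mem_doublyStochastic {R ι : Type*} [Field R] [LinearOrder R]
    [IsStrictOrderedRing R] [Fintype ι] [DecidableEq ι] {M : Matrix ι ι R}
    (hM : M ∈ doublyStochastic R ι) (C : ι → ι → R) :
    ∃ σ : Equiv.Perm ι, (∀ i, M i (σ i) ≠ 0) ∧ ∑ i, C i (σ i) ≤ ∑ i, ∑ j, M i j * C i j := by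
  obtain ⟨w, hw_nonneg, hw_sum, M_eq⟩ := exists_eq_sum_perm_of_mem_doublyStochastic hM
  have M_apply (i j : ι) : M i j = ∑ σ, w σ * σ.permMatrix R i j := by
    simp [← M_eq, Matrix.sum_apply]
  have cost_eq : ∑ i, ∑ j, M i j * C i j = ∑ σ, w σ * ∑ i, C i (σ i) := by
    simp only [M_apply, Finset.sum_mul, mul_assoc, ← sum_sum_permMatrix_mul, Finset.mul_sum]
    exact Finset.sum_comm_cycle
  have le_entry (σ : Equiv.Perm ι) (i : ι) : w σ ≤ M i (σ i) := by
    have entry_nonneg (τ : Equiv.Perm ι) : 0 ≤ w τ * τ.permMatrix R i (σ i) :=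
      mul_nonneg (hw_nonneg τ) (nonneg_of_mem_doublyStochastic permMatrix_mem_doublyStochastic)
    simpa [M_apply, Equiv.Perm.permMatrix, PEquiv.toMatrix_apply, Equiv.toPEquiv_apply] using
      Finset.single_le_sum (fun τ _ => entry_nonneg τ) (Finset.mem_univ σ)
  have support_nonempty : (Finset.univ.filter fun σ => w σ ≠ 0).Nonempty :=
    Finset.nonempty_of_sum_ne_zero (f := w) <| by
      rw [Finset.sum_filter_ne_zero, hw_sum]; exact one_ne_zero
  obtain ⟨σ, hσ, hle⟩ : ∃ σ ∈ Finset.univ.filter fun σ => w σ ≠ 0,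
      w σ * ∑ i, C i (σ i) ≤ w σ * ∑ i, ∑ j, M i j * C i j := by
    refine Finset.exists_le_of_sum_le support_nonempty ?_
    rw [← Finset.sum_mul, Finset.sum_filter_ne_zero, hw_sum, one_mul, cost_eq]
    refine (Finset.sum_subset (Finset.filter_subset _ _) fun σ _ hσ => ?_).le
    simp_all
  have w_pos : 0 < w σ := (hw_nonneg σ).lt_of_ne' (Finset.mem_filter.1 hσ).2
  exact ⟨σ, fun i => (w_pos.trans_le (le_entry σ i)).ne', le_of_mul_le_mul_left hle w_pos⟩

end Combinatorics

section FiniteSupport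

variable {α E F G : Type*} [MeasurableSpace α] [MeasurableSpace E] [MeasurableSpace F]
  [NormedAddCommGroup G] [NormedSpace ℝ G] [CompleteSpace G]

lemma of_ae_of_measure_singleton_ne_zero {μ : Measure α} {P : α → Prop} (h : ∀ᵐ z ∂μ, P z) {z : α}
    (hz : μ {z} ≠ 0) : P z := by
  by_contra hP
  exact hz (measure_mono_null (Set.singleton_subset_iff.2 hP) h)

lemma integral_eq_sum_of_ae_mem [MeasurableSingletonClass α] {μ : Measure α} [IsFiniteMeasure μ]
    {s : Finset α} (h : ∀ᵐ z ∂μ, z ∈ s) (g : α → G) :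
    ∫ z, g z ∂μ = ∑ z ∈ s, μ.real {z} • g z := by
  have restrict_eq : μ.restrict s = μ := Measure.restrict_eq_self_of_ae_mem h
  conv_lhs => rw [← restrict_eq]
  exact setIntegral_finset s IntegrableOn.finset

variable [MeasurableSingletonClass E] [MeasurableSingletonClass F]
  {ω : Measure (E × F)} [IsFiniteMeasure ω]

lemma measureReal_preimage_fst_singleton {t : Finset F} (h : ∀ᵐ p ∂ω, p.2 ∈ t) (u : E) :
    ω.real (Prod.fst ⁻¹' {u}) = ∑ v ∈ t, ω.real {(u, v)} := by
  have ae_eq : Prod.fst ⁻¹' {u} =ᵐ[ω] (({u} ×ˢ t : Finset (E × F)) : Set (E × F)) := by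
    filter_upwards [h] with p hp
    refine propext (show p.1 = u ↔ p ∈ ({u} ×ˢ t : Finset (E × F)) from ?_)
    rw [Finset.mem_product, Finset.mem_singleton, and_iff_left hp]
  rw [measureReal_congr ae_eq, ← sum_measureReal_singleton, Finset.sum_product,
    Finset.sum_singleton]

lemma measureReal_preimage_snd_singleton {s : Finset E} (h : ∀ᵐ p ∂ω, p.1 ∈ s) (v : F) :
    ω.real (Prod.snd ⁻¹' {v}) = ∑ u ∈ s, ω.real {(u, v)} := by
  have ae_eq : Prod.snd ⁻¹' {v} =ᵐ[ω] ((s ×ˢ {v} : Finset (E × F)) : Set (E × F)) := by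
    filter_upwards [h] with p hp
    refine propext (show p.2 = v ↔ p ∈ (s ×ˢ {v} : Finset (E × F)) from ?_)
    rw [Finset.mem_product, Finset.mem_singleton, and_iff_right hp]
  rw [measureReal_congr ae_eq, ← sum_measureReal_singleton, Finset.sum_product_right,
    Finset.sum_singleton]

end FiniteSupport

section EmpiricalMeasure

variable {ι α β : Type*} [Fintype ι] [MeasurableSpace α] [MeasurableSpace β]

/-- The uniform empirical measure of a finite family of points of a measurable space, counting
repeated points with multiplicity. It extends `empMeasure` beyond Euclidean spaces, so that it
also applies to projected clouds and to matchings; it is `0` for the empty family. -/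
def empiricalMeasure (x : ι → α) : Measure α :=
  (Fintype.card ι : ℝ≥0∞)⁻¹ • ∑ i, Measure.dirac (x i)

lemma empMeasure_eq_empiricalMeasure {d n : ℕ} (x : Fin n → Euc d) :
    empMeasure x = empiricalMeasure x := by
  rw [empMeasure, empiricalMeasure, Fintype.card_fin]

lemma empiricalMeasure_apply (x : ι → α) {s : Set α} [DecidablePred (· ∈ s)]
    (hs : MeasurableSet s) :
    empiricalMeasure x s = (Fintype.card ι : ℝ≥0∞)⁻¹ * Finset.card {i | x i ∈ s} := by
  simp [empiricalMeasure, Measure.finsetSum_apply, Measure.dirac_apply' _ hs, Set.indicator_apply,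
    Finset.sum_boole]

lemma measureReal_empiricalMeasure (x : ι → α) {s : Set α} [DecidablePred (· ∈ s)]
    (hs : MeasurableSet s) :
    (empiricalMeasure x).real s = Finset.card {i | x i ∈ s} / (Fintype.card ι : ℝ) := by
  simp [measureReal_def, empiricalMeasure_apply x hs, div_eq_inv_mul]

instance isProbabilityMeasure_empiricalMeasure [Nonempty ι] (x : ι → α) :
    IsProbabilityMeasure (empiricalMeasure x) where
  measure_univ := by
    simpa [empiricalMeasure_apply x MeasurableSet.univ] using
      ENNReal.inv_mul_cancel (by simp) (ENNReal.natCast_ne_top _)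

lemma map_empiricalMeasure (x : ι → α) {f : α → β} (hf : Measurable f) :
    (empiricalMeasure x).map f = empiricalMeasure (fun i => f (x i)) := by
  ext s hs
  rw [Measure.map_apply hf hs, empiricalMeasure_apply x (hf hs), empiricalMeasure_apply _ hs]
  rfl

lemma empiricalMeasure_comp_perm (x : ι → α) (σ : Equiv.Perm ι) :
    empiricalMeasure (fun i => x (σ i)) = empiricalMeasure x := by
  rw [empiricalMeasure, empiricalMeasure, Equiv.sum_comp σ fun i => Measure.dirac (x i)]

variable [MeasurableSingletonClass α]

lemma ae_mem_image_empiricalMeasure (x : ι → α) :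
    ∀ᵐ v ∂empiricalMeasure x, v ∈ Finset.univ.image x := by
  change empiricalMeasure x ((Finset.univ.image x : Finset α) : Set α)ᶜ = 0
  rw [empiricalMeasure_apply x (Finset.measurableSet _).compl]
  simp

lemma integral_empiricalMeasure {G : Type*} [NormedAddCommGroup G] [NormedSpace ℝ G]
    [CompleteSpace G] (x : ι → α) (g : α → G) :
    ∫ v, g v ∂empiricalMeasure x = (Fintype.card ι : ℝ)⁻¹ • ∑ i, g (x i) := by
  rw [empiricalMeasure, integral_smul_measure,
    integral_finsetSum_measure fun i _ => integrable_dirac (by simp)]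
  simp

lemma measureReal_empiricalMeasure_singleton_pos (x : ι → α) (i : ι) :
    0 < (empiricalMeasure x).real {x i} := by
  have : Nonempty ι := ⟨i⟩
  rw [measureReal_empiricalMeasure x (measurableSet_singleton _)]
  have : 0 < Finset.card {j | x j ∈ ({x i} : Set α)} := Finset.card_pos.2 ⟨i, by simp⟩
  positivity

lemma sum_div_measureReal_empiricalMeasure_singleton (x : ι → α) (G : α → ℝ) :
    ∑ i, G (x i) / (empiricalMeasure x).real {x i} =
      Fintype.card ι * ∑ v ∈ Finset.univ.image x, G v := by
  rcases isEmpty_or_nonempty ι with _ | _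
  · simp
  have average_eq : (Fintype.card ι : ℝ)⁻¹ • ∑ i, G (x i) / (empiricalMeasure x).real {x i} =
      ∑ v ∈ Finset.univ.image x, G v := by
    rw [← integral_empiricalMeasure x fun v => G v / (empiricalMeasure x).real {v},
      integral_eq_sum_of_ae_mem (ae_mem_image_empiricalMeasure x)]
    refine Finset.sum_congr rfl fun v hv => ?_
    obtain ⟨i, -, rfl⟩ := Finset.mem_image.1 hv
    exact mul_div_cancel₀ _ (measureReal_empiricalMeasure_singleton_pos x i).ne'
  rw [← average_eq, smul_eq_mul]
  field_simp

end EmpiricalMeasure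

section Quantile

lemma quantile_eq_of_measureReal_Iio_lt {ν : Measure ℝ} [IsFiniteMeasure ν] {a t : ℝ}
    (hlt : ν.real (Set.Iio a) < t) (hle : t ≤ ν.real (Set.Iic a)) : quantile ν t = a := by
  have superlevel_eq : {s : ℝ | ENNReal.ofReal t ≤ ν (Set.Iic s)} = Set.Ici a := by
    ext s
    rw [Set.mem_ofPred_eq, Set.mem_Ici, ENNReal.ofReal_le_iff_le_toReal (measure_ne_top ν _)]
    refine ⟨fun hs => ?_, fun hs => hle.trans (measureReal_mono (Set.Iic_subset_Iic.2 hs))⟩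
    by_contra! hsa
    exact (hs.trans (measureReal_mono (Set.Iic_subset_Iio.2 hsa))).not_gt hlt
  rw [quantile, superlevel_eq, csInf_Ici]

variable {n : ℕ}

lemma quantile_empiricalMeasure {a : Fin n → ℝ} (ha : Monotone a) {k : Fin n} {t : ℝ}
    (ht : t ∈ Set.Ioc ((k : ℝ) / n) (((k + 1 : ℕ) : ℝ) / n)) :
    quantile (empiricalMeasure a) t = a k := by
  have : Nonempty (Fin n) := ⟨k⟩
  have card_Iio_le : Finset.card {i | a i ∈ Set.Iio (a k)} ≤ (k : ℕ) := by
    rw [← Fin.card_Iio k]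
    refine Finset.card_le_card fun i hi => Finset.mem_Iio.2 ?_
    exact ha.reflect_lt (Finset.mem_filter.1 hi).2
  have le_card_Iic : (k + 1 : ℕ) ≤ Finset.card {i | a i ∈ Set.Iic (a k)} := by
    rw [← Fin.card_Iic k]
    exact Finset.card_le_card fun i hi => by simpa using ha (Finset.mem_Iic.1 hi)
  refine quantile_eq_of_measureReal_Iio_lt (lt_of_le_of_lt ?_ ht.1) (ht.2.trans ?_)
  · rw [measureReal_empiricalMeasure a measurableSet_Iio, Fintype.card_fin]
    gcongr
  · rw [measureReal_empiricalMeasure a measurableSet_Iic, Fintype.card_fin]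
    gcongr

lemma monotone_natCast_div (n : ℕ) : Monotone fun k : ℕ => (k : ℝ) / n :=
  fun _ _ h => by dsimp only; gcongr

lemma iUnion_Ioc_natCast_div (hn : 0 < n) :
    ⋃ k : Fin n, Set.Ioc ((k : ℝ) / n) (((k + 1 : ℕ) : ℝ) / n) = Set.Ioc 0 1 := by
  have hn' : (n : ℝ) ≠ 0 := by exact_mod_cast hn.ne'
  have biUnion_eq := (monotone_natCast_div n).biUnion_Ico_Ioc_map_succ 0 n
  rw [Nat.cast_zero, zero_div, div_self hn'] at biUnion_eq
  ext t
  simp [← biUnion_eq, Fin.exists_iff]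

lemma map_restrict_Icc_eq_empiricalMeasure {β : Type*} [MeasurableSpace β] (hn : 0 < n)
    {f : ℝ → β} {z : Fin n → β}
    (hf : ∀ k : Fin n, ∀ t ∈ Set.Ioc ((k : ℝ) / n) (((k + 1 : ℕ) : ℝ) / n), f t = z k) :
    (volume.restrict (Set.Icc (0 : ℝ) 1)).map f = empiricalMeasure z := by
  let cell (k : Fin n) : Set ℝ := Set.Ioc ((k : ℝ) / n) (((k + 1 : ℕ) : ℝ) / n)
  have disjoint_cells : Pairwise (Function.onFun Disjoint cell) := fun i j hij =>
    (monotone_natCast_div n).pairwise_disjoint_on_Ioc_succ (Fin.val_ne_of_ne hij)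
  have volume_cell (k : Fin n) : volume (cell k) = (n : ℝ≥0∞)⁻¹ := by
    rw [Real.volume_Ioc, ← sub_div, Nat.cast_succ, add_sub_cancel_left,
      ENNReal.ofReal_div_of_pos (by exact_mod_cast hn)]
    simp
  have ae_eq_const (k : Fin n) : f =ᵐ[volume.restrict (cell k)] fun _ => z k := by
    filter_upwards [ae_restrict_mem measurableSet_Ioc] with t ht using hf k t ht
  have aemeasurable_f : AEMeasurable f (Measure.sum fun k => volume.restrict (cell k)) :=
    aemeasurable_sum_measure_iff.2 fun k => aemeasurable_const.congr (ae_eq_const k).symm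
  rw [← restrict_Ioc_eq_restrict_Icc, ← iUnion_Ioc_natCast_div hn,
    Measure.restrict_iUnion disjoint_cells fun _ => measurableSet_Ioc,
    Measure.map_sum aemeasurable_f, Measure.sum_fintype, empiricalMeasure, Finset.smul_sum]
  refine Finset.sum_congr rfl fun k _ => ?_
  rw [Measure.map_congr (ae_eq_const k), Measure.map_const, Measure.restrict_apply_univ,
    volume_cell, Fintype.card_fin]

/-- The comonotone (quantile) coupling of two measures on the line; `piTheta` is the case of two
projected measures. -/
def comonotonePlan (μ ν : Measure ℝ) : Measure (ℝ × ℝ) :=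
  (volume.restrict (Set.Icc (0 : ℝ) 1)).map fun t => (quantile μ t, quantile ν t)

lemma comonotonePlan_empiricalMeasure (hn : 0 < n) {a b : Fin n → ℝ}
    {p : Equiv.Perm (Fin n) × Equiv.Perm (Fin n)} (hp : p ∈ sortingPairs a b) :
    comonotonePlan (empiricalMeasure a) (empiricalMeasure b) =
      empiricalMeasure fun k => (a (p.1 k), b (p.2 k)) := by
  rw [← empiricalMeasure_comp_perm a p.1, ← empiricalMeasure_comp_perm b p.2]
  exact map_restrict_Icc_eq_empiricalMeasure hn fun k t ht => by
    rw [quantile_empiricalMeasure hp.1 ht, quantile_empiricalMeasure hp.2 ht]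

end Quantile

section Lift

variable {ι E F : Type*} [Fintype ι] [MeasurableSpace E] [MeasurableSpace F]

/-- The lift to indices of a coupling `ω` of two empirical measures: the mass `ω {(u, v)}` is
split evenly between the pairs `(i, j)` with `x i = u` and `y j = v`. Entries are scaled by the
number of points, so that rows and columns sum to `1`. -/
def liftMatrix (x : ι → E) (y : ι → F) (ω : Measure (E × F)) : Matrix ι ι ℝ := fun i j =>
  ω.real {(x i, y j)} / (empiricalMeasure x).real {x i} / (empiricalMeasure y).real {y j} /
    Fintype.card ι

variable [MeasurableSingletonClass E] [MeasurableSingletonClass F]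
  {x : ι → E} {y : ι → F} {ω : Measure (E × F)}

lemma ae_mem_image_of_mem_coupling
    (hω : ω ∈ Coupling (empiricalMeasure x) (empiricalMeasure y)) :
    (∀ᵐ p ∂ω, p.1 ∈ Finset.univ.image x) ∧ ∀ᵐ p ∂ω, p.2 ∈ Finset.univ.image y := by
  obtain ⟨-, hfst, hsnd⟩ := hω
  exact ⟨ae_of_ae_map measurable_fst.aemeasurable (hfst ▸ ae_mem_image_empiricalMeasure x),
    ae_of_ae_map measurable_snd.aemeasurable (hsnd ▸ ae_mem_image_empiricalMeasure y)⟩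

lemma sum_liftMatrix_row (hω : ω ∈ Coupling (empiricalMeasure x) (empiricalMeasure y)) (i : ι) :
    ∑ j, liftMatrix x y ω i j = 1 := by
  have : Nonempty ι := ⟨i⟩
  have : IsProbabilityMeasure ω := hω.1
  have marginal : ∑ v ∈ Finset.univ.image y, ω.real {(x i, v)} =
      (empiricalMeasure x).real {x i} := by
    rw [← measureReal_preimage_fst_singleton (ae_mem_image_of_mem_coupling hω).2,
      ← map_measureReal_apply measurable_fst (measurableSet_singleton _), hω.2.1]
  have mass_pos := measureReal_empiricalMeasure_singleton_pos x i
  simp only [liftMatrix]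
  rw [← Finset.sum_div, sum_div_measureReal_empiricalMeasure_singleton y fun v =>
    ω.real {(x i, v)} / (empiricalMeasure x).real {x i}, ← Finset.sum_div, marginal]
  field_simp

lemma sum_liftMatrix_col (hω : ω ∈ Coupling (empiricalMeasure x) (empiricalMeasure y)) (j : ι) :
    ∑ i, liftMatrix x y ω i j = 1 := by
  have : Nonempty ι := ⟨j⟩
  have : IsProbabilityMeasure ω := hω.1
  have marginal : ∑ u ∈ Finset.univ.image x, ω.real {(u, y j)} =
      (empiricalMeasure y).real {y j} := by
    rw [← measureReal_preimage_snd_singleton (ae_mem_image_of_mem_coupling hω).1,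
      ← map_measureReal_apply measurable_snd (measurableSet_singleton _), hω.2.2]
  have mass_pos := measureReal_empiricalMeasure_singleton_pos y j
  simp only [liftMatrix]
  rw [← Finset.sum_div, ← Finset.sum_div,
    sum_div_measureReal_empiricalMeasure_singleton x fun u => ω.real {(u, y j)}, marginal]
  field_simp

lemma liftMatrix_mem_doublyStochastic [DecidableEq ι]
    (hω : ω ∈ Coupling (empiricalMeasure x) (empiricalMeasure y)) :
    liftMatrix x y ω ∈ doublyStochastic ℝ ι :=
  mem_doublyStochastic_iff_sum.2
    ⟨fun i j => by unfold liftMatrix; positivity, sum_liftMatrix_row hω, sum_liftMatrix_col hω⟩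

lemma integral_eq_sum_liftMatrix (hω : ω ∈ Coupling (empiricalMeasure x) (empiricalMeasure y))
    (c : E → F → ℝ) :
    ∫ z, c z.1 z.2 ∂ω =
      (1 / (Fintype.card ι : ℝ)) * ∑ i, ∑ j, liftMatrix x y ω i j * c (x i) (y j) := by
  have : IsProbabilityMeasure ω := hω.1
  have ae_mem : ∀ᵐ z ∂ω, z ∈ Finset.univ.image x ×ˢ Finset.univ.image y := by
    obtain ⟨hfst, hsnd⟩ := ae_mem_image_of_mem_coupling hω
    filter_upwards [hfst, hsnd] with z hz₁ hz₂ using Finset.mem_product.2 ⟨hz₁, hz₂⟩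
  have sum_row (i : ι) : ∑ j, liftMatrix x y ω i j * c (x i) (y j) =
      (∑ v ∈ Finset.univ.image y, ω.real {(x i, v)} * c (x i) v) /
        (empiricalMeasure x).real {x i} := by
    have : Nonempty ι := ⟨i⟩
    calc ∑ j, liftMatrix x y ω i j * c (x i) (y j)
        = (∑ j, ω.real {(x i, y j)} * c (x i) (y j) / (empiricalMeasure y).real {y j}) /
            (empiricalMeasure x).real {x i} / Fintype.card ι := by
          simp only [Finset.sum_div, liftMatrix]
          exact Finset.sum_congr rfl fun j _ => by ring
      _ = _ := by
          rw [sum_div_measureReal_empiricalMeasure_singleton y fun v =>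
            ω.real {(x i, v)} * c (x i) v]
          field_simp
  rw [integral_eq_sum_of_ae_mem ae_mem, Finset.sum_product]
  simp only [sum_row, smul_eq_mul]
  rw [sum_div_measureReal_empiricalMeasure_singleton x fun u =>
    ∑ v ∈ Finset.univ.image y, ω.real {(u, v)} * c u v]
  rcases isEmpty_or_nonempty ι with _ | _
  · simp
  · field_simp

lemma exists_perm_average_le_integral
    (hω : ω ∈ Coupling (empiricalMeasure x) (empiricalMeasure y)) (c : E → F → ℝ) :
    ∃ σ : Equiv.Perm ι, (∀ i, ω {(x i, y (σ i))} ≠ 0) ∧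
      (1 / (Fintype.card ι : ℝ)) * ∑ i, c (x i) (y (σ i)) ≤ ∫ z, c z.1 z.2 ∂ω := by
  obtain ⟨σ, hσ_ne, hσ_le⟩ := exists_perm_sum_le_of_mem_doublyStochastic
    (liftMatrix_mem_doublyStochastic hω) fun i j => c (x i) (y j)
  refine ⟨σ, fun i hi => hσ_ne i ?_, ?_⟩
  · simp [liftMatrix, measureReal_def, hi]
  · rw [integral_eq_sum_liftMatrix hω]
    gcongr

end Lift

section ConstrainedCouplings

variable {E F : Type*} [MeasurableSpace E] [MeasurableSpace F]

/-- The couplings of `μ` and `ν` whose image under `f × g` is the comonotone coupling of `f#μ` and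
`g#ν`; `OmegaTheta` is the case `f = g = P_θ`. -/
def constrainedCouplings (f : E → ℝ) (g : F → ℝ) (μ : Measure E) (ν : Measure F) :
    Set (Measure (E × F)) :=
  {ω | ω ∈ Coupling μ ν ∧ ω.map (Prod.map f g) = comonotonePlan (μ.map f) (ν.map g)}

variable {n : ℕ} {f : E → ℝ} {g : F → ℝ} {x : Fin n → E} {y : Fin n → F}
  {p : Equiv.Perm (Fin n) × Equiv.Perm (Fin n)}

lemma comonotonePlan_map_empiricalMeasure (hn : 0 < n) (hf : Measurable f) (hg : Measurable g)
    (hp : p ∈ sortingPairs (f ∘ x) (g ∘ y)) :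
    comonotonePlan ((empiricalMeasure x).map f) ((empiricalMeasure y).map g) =
      empiricalMeasure fun k => (f (x (p.1 k)), g (y (p.2 k))) := by
  rw [map_empiricalMeasure x hf, map_empiricalMeasure y hg]
  exact comonotonePlan_empiricalMeasure hn hp

lemma empiricalMeasure_matching_mem_constrainedCouplings (hn : 0 < n) (hf : Measurable f)
    (hg : Measurable g) (hp : p ∈ sortingPairs (f ∘ x) (g ∘ y)) :
    empiricalMeasure (fun k => (x (p.1 k), y (p.2 k))) ∈
      constrainedCouplings f g (empiricalMeasure x) (empiricalMeasure y) := by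
  have : NeZero n := ⟨hn.ne'⟩
  refine ⟨⟨inferInstance, ?_, ?_⟩, ?_⟩
  · rw [map_empiricalMeasure _ measurable_fst, empiricalMeasure_comp_perm x p.1]
  · rw [map_empiricalMeasure _ measurable_snd, empiricalMeasure_comp_perm y p.2]
  · rw [map_empiricalMeasure _ (hf.prodMap hg), comonotonePlan_map_empiricalMeasure hn hf hg hp]
    rfl

lemma exists_projections_eq_of_mem_constrainedCouplings (hn : 0 < n) (hf : Measurable f)
    (hg : Measurable g) (hp : p ∈ sortingPairs (f ∘ x) (g ∘ y)) {ω : Measure (E × F)}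
    (hω : ω ∈ constrainedCouplings f g (empiricalMeasure x) (empiricalMeasure y))
    {u : E} {v : F} (huv : ω {(u, v)} ≠ 0) :
    ∃ k, f (x (p.1 k)) = f u ∧ g (y (p.2 k)) = g v := by
  have map_eq : ω.map (Prod.map f g) = empiricalMeasure fun k => (f (x (p.1 k)), g (y (p.2 k))) :=
    hω.2.trans (comonotonePlan_map_empiricalMeasure hn hf hg hp)
  have ae_mem := ae_of_ae_map (hf.prodMap hg).aemeasurable
    (map_eq ▸ ae_mem_image_empiricalMeasure fun k => (f (x (p.1 k)), g (y (p.2 k))))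
  simpa using of_ae_of_measure_singleton_ne_zero ae_mem huv

lemma monovary_of_mem_constrainedCouplings (hn : 0 < n) (hf : Measurable f) (hg : Measurable g)
    {ω : Measure (E × F)}
    (hω : ω ∈ constrainedCouplings f g (empiricalMeasure x) (empiricalMeasure y))
    {σ : Equiv.Perm (Fin n)} (hσ : ∀ i, ω {(x i, y (σ i))} ≠ 0) :
    Monovary ((g ∘ y) ∘ σ) (f ∘ x) := by
  obtain ⟨p, hp⟩ := sortingPairs_nonempty (f ∘ x) (g ∘ y)
  intro i j hij
  obtain ⟨k, hfk, hgk⟩ := exists_projections_eq_of_mem_constrainedCouplings hn hf hg hp hω (hσ i)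
  obtain ⟨l, hfl, hgl⟩ := exists_projections_eq_of_mem_constrainedCouplings hn hf hg hp hω (hσ j)
  simp only [Function.comp_apply, ← hfk, ← hfl, ← hgk, ← hgl] at hij ⊢
  exact hp.2 (hp.1.reflect_lt hij).le

variable [MeasurableSingletonClass E] [MeasurableSingletonClass F]

lemma exists_mem_sortingPairs_average_le_integral (hn : 0 < n) (hf : Measurable f)
    (hg : Measurable g) (c : E → F → ℝ) {ω : Measure (E × F)}
    (hω : ω ∈ constrainedCouplings f g (empiricalMeasure x) (empiricalMeasure y)) :
    ∃ q ∈ sortingPairs (f ∘ x) (g ∘ y),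
      (1 / (n : ℝ)) * ∑ i, c (x (q.1 i)) (y (q.2 i)) ≤ ∫ z, c z.1 z.2 ∂ω := by
  obtain ⟨σ, hσ_atom, hσ_le⟩ := exists_perm_average_le_integral hω.1 c
  obtain ⟨τ, hτ⟩ := exists_mem_sortingPairs_of_monovary
    (monovary_of_mem_constrainedCouplings hn hf hg hω hσ_atom)
  refine ⟨(τ, σ * τ), hτ, ?_⟩
  rw [Fintype.card_fin] at hσ_le
  exact (congrArg _ (Equiv.sum_comp τ fun i => c (x i) (y (σ i)))).trans_le hσ_le

end ConstrainedCouplings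

theorem CWsq_discrete_monge_general {E F : Type*} [MeasurableSpace E] [MeasurableSpace F]
    [MeasurableSingletonClass E] [MeasurableSingletonClass F] {f : E → ℝ} (hf : Measurable f)
    {g : F → ℝ} (hg : Measurable g) {n : ℕ} (hn : 0 < n) (c : E → F → ℝ)
    (x : Fin n → E) (y : Fin n → F) :
    ∃ p ∈ sortingPairs (f ∘ x) (g ∘ y),
      IsLeast ((fun ω => ∫ z, c z.1 z.2 ∂ω) ''
          constrainedCouplings f g (empiricalMeasure x) (empiricalMeasure y))
        ((1 / (n : ℝ)) * ∑ i, c (x (p.1 i)) (y (p.2 i))) ∧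
      ∀ q ∈ sortingPairs (f ∘ x) (g ∘ y),
        (1 / (n : ℝ)) * ∑ i, c (x (p.1 i)) (y (p.2 i))
          ≤ (1 / (n : ℝ)) * ∑ i, c (x (q.1 i)) (y (q.2 i)) := by
  obtain ⟨p, hp, hmin⟩ := Set.exists_min_image (sortingPairs (f ∘ x) (g ∘ y))
    (fun q => (1 / (n : ℝ)) * ∑ i, c (x (q.1 i)) (y (q.2 i))) (Set.toFinite _)
    (sortingPairs_nonempty _ _)
  refine ⟨p, hp,
    ⟨⟨_, empiricalMeasure_matching_mem_constrainedCouplings hn hf hg hp, ?_⟩, ?_⟩, hmin⟩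
  · simp only [integral_empiricalMeasure, Fintype.card_fin, smul_eq_mul, one_div]
  · rintro _ ⟨ω, hω, rfl⟩
    obtain ⟨q, hq, hq_le⟩ := exists_mem_sortingPairs_average_le_integral hn hf hg c hω
    exact (hmin q hq).trans hq_le

/-- Monge formulation of `CW_θ²` between point clouds: it equals the
minimum over sorting permutation pairs `(σ, τ) ∈ Perm_θ(X, Y)` of the matching cost,
and this minimum is attained. -/
theorem CWsq_discrete_monge {d n : ℕ} (hn : 0 < n)
    (x y : Fin n → Euc d) (θ : Euc d) (hθ : ‖θ‖ = 1) :
    ∃ p ∈ PermTheta θ x y,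
      CWsq θ (empMeasure x) (empMeasure y)
          = (1 / (n : ℝ)) * ∑ i, ‖x (p.1 i) - y (p.2 i)‖ ^ 2 ∧
      ∀ q ∈ PermTheta θ x y,
        (1 / (n : ℝ)) * ∑ i, ‖x (p.1 i) - y (p.2 i)‖ ^ 2
          ≤ (1 / (n : ℝ)) * ∑ i, ‖x (q.1 i) - y (q.2 i)‖ ^ 2 := by
  obtain ⟨p, hp, hleast, hmin⟩ := CWsq_discrete_monge_general
    (measurable_const.inner measurable_id) (measurable_const.inner measurable_id) hn
    (fun u v => ‖u - v‖ ^ 2) x y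
  rw [empMeasure_eq_empiricalMeasure, empMeasure_eq_empiricalMeasure]
  exact ⟨p, hp, hleast.csInf_eq, hmin⟩

end
end

section
/- For any μ1, μ2 ∈ P_2(ℝ^d), the infimum defining the Min-Pivot Sliced discrepancy minPS²(μ1, μ2) := inf_{θ ∈ S^{d−1}} PS_θ²(μ1, μ2) is attained at some θ* ∈ S^{d−1}. -/
open MeasureTheory Filter Topology ProbabilityTheory
open scoped ENNReal RealInnerProductSpace Classical

noncomputable section

/-! The pairs `(θ, ρ)` with `θ` in the unit sphere and `ρ ∈ Γ(μ_θ, μ1, μ2)` form a compact set, on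
which the lower semicontinuous cost `∫ ‖x1 - x2‖² dρ` attains its minimum. Compactness is
Prokhorov's theorem, once `θ ↦ μ_θ` is known to be continuous for `W₂`: then it is weakly
continuous, and optimality of the two marginal plans is a closed condition because
`θ ↦ W₂(μ_θ, μ_i)` is continuous.

Continuity of `θ ↦ μ_θ` rests on the quantile coupling being optimal on the line. The square
`|x - y|²` is twice the area of the triangle `x ≤ s < u < y` or `y ≤ s < u < x`, so the cost of a
coupling of `μ` and `ν` is twice the integral over `s < u` of the masses it gives to the quadrants
`{x ≤ s, u < y}` and `{y ≤ s, u < x}`. Any coupling gives the first at least the positive part of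
`μ (-∞, s] - ν (-∞, u]`, and the quantile coupling gives no more than that. -/

section WeakTopology

lemma lowerSemicontinuous_lintegral_probabilityMeasure {X : Type*} [MeasurableSpace X]
    [TopologicalSpace X] [OpensMeasurableSpace X] {f : X → NNReal} (hf : Continuous f) :
    LowerSemicontinuous fun μ : ProbabilityMeasure X => ∫⁻ x, f x ∂μ := by
  let truncation (n : ℕ) : BoundedContinuousFunction X NNReal :=
    .mkOfBound ⟨fun x => min (f x) n, by fun_prop⟩ n fun x y =>
      NNReal.dist_eq _ _ ▸ abs_sub_le_of_nonneg_of_le (by simp) (by simp) (by simp) (by simp)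
  have lintegral_eq_iSup (μ : ProbabilityMeasure X) :
      ∫⁻ x, f x ∂μ = ⨆ n, ∫⁻ x, truncation n x ∂μ := by
    have mono : Monotone fun n x => (truncation n x : ℝ≥0∞) :=
      fun m n hmn x => ENNReal.coe_le_coe.2 (min_le_min_left _ (Nat.cast_le.2 hmn))
    rw [← lintegral_iSup (fun n => (truncation n).continuous.measurable.coe_nnreal_ennreal) mono]
    refine lintegral_congr fun x => le_antisymm ?_ (iSup_le fun n => by simp [truncation])
    obtain ⟨n, hn⟩ := exists_nat_ge (f x)
    exact le_iSup_of_le n (by simp [truncation, hn])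
  simp_rw [lintegral_eq_iSup]
  exact lowerSemicontinuous_iSup fun n =>
    (ProbabilityMeasure.continuous_lintegral_boundedContinuousFunction _).lowerSemicontinuous

lemma isCompact_setOf_map_fst_mem_map_snd_mem {X Y : Type*}
    [MetricSpace X] [CompleteSpace X] [SecondCountableTopology X] [MeasurableSpace X]
    [BorelSpace X] [MetricSpace Y] [CompleteSpace Y] [SecondCountableTopology Y]
    [MeasurableSpace Y] [BorelSpace Y]
    {A : Set (ProbabilityMeasure X)} {B : Set (ProbabilityMeasure Y)}
    (hA : IsCompact A) (hB : IsCompact B) :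
    IsCompact {π : ProbabilityMeasure (X × Y) |
      π.map (f := Prod.fst) (by fun_prop) ∈ A ∧ π.map (f := Prod.snd) (by fun_prop) ∈ B} := by
  have closed := (hA.isClosed.preimage (ProbabilityMeasure.continuous_map continuous_fst)).inter
    (hB.isClosed.preimage
      (ProbabilityMeasure.continuous_map (Ω := X × Y) continuous_snd))
  refine (isCompact_closure_of_isTightMeasureSet (.prodMk
    ((isTightMeasureSet_of_isCompact_closure (S := A) (by rwa [hA.isClosed.closure_eq])).subset ?_)
    ((isTightMeasureSet_of_isCompact_closure (S := B)
      (by rwa [hB.isClosed.closure_eq])).subset ?_))).of_isClosed_subset closed subset_closure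
  · rintro _ ⟨_, ⟨π, hπ, rfl⟩, rfl⟩
    exact ⟨_, hπ.1, rfl⟩
  · rintro _ ⟨_, ⟨π, hπ, rfl⟩, rfl⟩
    exact ⟨_, hπ.2, rfl⟩

end WeakTopology

section Gluing

lemma exists_gluing {X Y Z : Type*} [MeasurableSpace X] [MeasurableSpace Y] [MeasurableSpace Z]
    [StandardBorelSpace Y] [Nonempty Y] [StandardBorelSpace Z] [Nonempty Z]
    (π₁ : Measure (X × Y)) (π₂ : Measure (X × Z)) [IsFiniteMeasure π₁] [IsFiniteMeasure π₂]
    (h : π₁.map Prod.fst = π₂.map Prod.fst) :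
    ∃ ρ : Measure (X × Y × Z), ρ.map (fun p => (p.1, p.2.1)) = π₁ ∧
      ρ.map (fun p => (p.1, p.2.2)) = π₂ := by
  refine ⟨π₁.fst ⊗ₘ (π₁.condKernel ×ₖ π₂.condKernel), ?_, ?_⟩
  · have : π₁.fst ⊗ₘ (π₁.condKernel ×ₖ π₂.condKernel).fst = π₁ := by
      rw [Kernel.fst_prod, π₁.disintegrate]
    rwa [Kernel.fst_eq, Measure.compProd_map measurable_fst] at this
  · have : π₁.fst ⊗ₘ (π₁.condKernel ×ₖ π₂.condKernel).snd = π₂ := by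
      rw [Kernel.snd_prod, show π₁.fst = π₂.fst from h, π₂.disintegrate]
    rwa [Kernel.snd_eq, Measure.compProd_map measurable_snd] at this

end Gluing

section QuadraticCost

variable {E : Type*} [NormedAddCommGroup E]

lemma ofReal_integral_norm_sq {X : Type*} [MeasurableSpace X] {ρ : Measure X} {f : X → E}
    (hf : MemLp f 2 ρ) : ENNReal.ofReal (∫ x, ‖f x‖ ^ 2 ∂ρ) = ∫⁻ x, ‖f x‖ₑ ^ 2 ∂ρ := by
  rw [ofReal_integral_eq_lintegral_ofReal (memLp_two_iff_integrable_sq_norm hf.1 |>.1 hf)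
    (.of_forall fun x => by positivity)]
  simp [ENNReal.ofReal_pow]

lemma eLpNorm_two_sq {X : Type*} [MeasurableSpace X] (f : X → E) (ρ : Measure X) :
    eLpNorm f 2 ρ ^ 2 = ∫⁻ x, ‖f x‖ₑ ^ 2 ∂ρ := by
  simpa using eLpNorm_nnreal_pow_eq_lintegral (p := 2) (f := f) (μ := ρ) two_ne_zero

lemma lpNorm_map {X Y : Type*} [MeasurableSpace X] [MeasurableSpace Y] {ρ : Measure X}
    {f : X → Y} {g : Y → E} (hg : AEStronglyMeasurable g (ρ.map f)) (hf : AEMeasurable f ρ)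
    (p : ℝ≥0∞) : lpNorm g p (ρ.map f) = lpNorm (g ∘ f) p ρ := by
  rw [← toReal_eLpNorm hg, ← toReal_eLpNorm (hg.comp_aemeasurable hf), eLpNorm_map_measure hg hf]

lemma lpNorm_le_mul_lpNorm {X F : Type*} [MeasurableSpace X] {P : Measure X}
    [NormedAddCommGroup F] {f : X → E} {g : X → F} {p : ℝ≥0∞} {c : ℝ}
    (hc : 0 ≤ c) (hg : MemLp g p P) (h : ∀ x, ‖f x‖ ≤ c * ‖g x‖) :
    lpNorm f p P ≤ c * lpNorm g p P :=
  calc lpNorm f p P ≤ lpNorm (c • fun x => ‖g x‖) p P :=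
        lpNorm_mono_real (hg.norm.const_smul c) h
    _ = c * lpNorm g p P := by
        rw [lpNorm_const_smul, lpNorm_norm hg.1, coe_nnnorm, Real.norm_of_nonneg hc]

lemma lowerSemicontinuous_lintegral_enorm_sq {X : Type*} [MeasurableSpace X]
    [TopologicalSpace X] [OpensMeasurableSpace X] {f : X → E} (hf : Continuous f) :
    LowerSemicontinuous fun ρ : ProbabilityMeasure X => ∫⁻ x, ‖f x‖ₑ ^ 2 ∂ρ := by
  simpa only [Pi.pow_apply, ENNReal.coe_pow, enorm_eq_nnnorm] using
    lowerSemicontinuous_lintegral_probabilityMeasure (hf.nnnorm.pow 2)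

variable [MeasurableSpace E] {μ ν ξ : Measure E} {π : Measure (E × E)}

lemma tCost_nonneg (π : Measure (E × E)) : 0 ≤ tCost π :=
  integral_nonneg fun _ => sq_nonneg _

lemma W2sq_nonneg (μ ν : Measure E) : 0 ≤ W2sq μ ν :=
  Real.sInf_nonneg (Set.forall_mem_image.2 fun π _ => tCost_nonneg π)

lemma W2sq_le_tCost (hπ : π ∈ Coupling μ ν) : W2sq μ ν ≤ tCost π :=
  csInf_le ⟨0, Set.forall_mem_image.2 fun π _ => tCost_nonneg π⟩ (Set.mem_image_of_mem _ hπ)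

lemma map_prodMk_mem_Coupling {Ω X Y : Type*} [MeasurableSpace Ω] [MeasurableSpace X]
    [MeasurableSpace Y] {P : Measure Ω} [IsProbabilityMeasure P] {f : Ω → X} {g : Ω → Y}
    (hf : AEMeasurable f P) (hg : AEMeasurable g P) :
    P.map (fun ω => (f ω, g ω)) ∈ Coupling (P.map f) (P.map g) :=
  ⟨Measure.isProbabilityMeasure_map (hf.prodMk hg), Measure.fst_map_prodMk₀ hg,
    Measure.snd_map_prodMk₀ hf⟩

lemma marginals_of_mem_Gamma {ρ : Measure (E × E × E)} (hρ : ρ ∈ Gamma ν μ ξ) :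
    ρ.map Prod.fst = ν ∧ ρ.map (fun p => p.2.1) = μ ∧ ρ.map (fun p => p.2.2) = ξ := by
  obtain ⟨-, ⟨⟨-, rfl, rfl⟩, -⟩, ⟨⟨-, -, rfl⟩, -⟩⟩ := hρ
  refine ⟨?_, ?_, ?_⟩ <;> rw [Measure.map_map (by fun_prop) (by fun_prop)] <;> rfl

variable [BorelSpace E] [SecondCountableTopology E]

lemma sqrt_tCost (π : Measure (E × E)) :
    √(tCost π) = lpNorm (fun p => p.1 - p.2) 2 π := by
  rw [lpNorm_eq_integral_norm_rpow_toReal two_ne_zero ENNReal.ofNat_ne_top (by fun_prop),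
    Real.sqrt_eq_rpow]
  simp [tCost]

lemma mem_P2_iff : μ ∈ P2 (E := E) ↔ IsProbabilityMeasure μ ∧ MemLp id 2 μ :=
  and_congr_right fun _ => (memLp_two_iff_integrable_sq_norm (by fun_prop)).symm

lemma map_mem_P2 {Ω : Type*} [MeasurableSpace Ω] {P : Measure Ω} [IsProbabilityMeasure P]
    {f : Ω → E} (hf : MemLp f 2 P) : P.map f ∈ P2 (E := E) :=
  mem_P2_iff.2 ⟨Measure.isProbabilityMeasure_map hf.1.aemeasurable,
    (memLp_map_measure_iff (by fun_prop) hf.1.aemeasurable).2 hf⟩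

lemma memLp_of_map_mem_P2 {Ω : Type*} [MeasurableSpace Ω] {P : Measure Ω} {f : Ω → E}
    (hf : AEMeasurable f P) (h : P.map f ∈ P2 (E := E)) : MemLp f 2 P :=
  (memLp_map_measure_iff (by fun_prop) hf).1 (mem_P2_iff.1 h).2

lemma memLp_sub_of_mem_Coupling (hμ : μ ∈ P2 (E := E))
    (hν : ν ∈ P2 (E := E)) (hπ : π ∈ Coupling μ ν) :
    MemLp (fun p => p.1 - p.2) 2 π :=
  (memLp_of_map_mem_P2 (by fun_prop) (hπ.2.1 ▸ hμ)).sub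
    (memLp_of_map_mem_P2 (by fun_prop) (hπ.2.2 ▸ hν))

lemma ofReal_tCost (hμ : μ ∈ P2 (E := E)) (hν : ν ∈ P2 (E := E))
    (hπ : π ∈ Coupling μ ν) :
    ENNReal.ofReal (tCost π) = ∫⁻ p, ‖p.1 - p.2‖ₑ ^ 2 ∂π :=
  ofReal_integral_norm_sq (memLp_sub_of_mem_Coupling hμ hν hπ)

lemma W2_map_le {Ω : Type*} [MeasurableSpace Ω] {P : Measure Ω} [IsProbabilityMeasure P]
    {f g : Ω → E} (hf : AEMeasurable f P) (hg : AEMeasurable g P) :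
    W2 (P.map f) (P.map g) ≤ lpNorm (f - g) 2 P := by
  calc W2 (P.map f) (P.map g) ≤ √(tCost (P.map fun ω => (f ω, g ω))) :=
        Real.sqrt_le_sqrt (W2sq_le_tCost (map_prodMk_mem_Coupling hf hg))
    _ = lpNorm (f - g) 2 P := by
        rw [sqrt_tCost, lpNorm_map (by fun_prop) (hf.prodMk hg)]
        rfl

lemma W2_eq_lpNorm_of_mem_OptPlan (hπ : π ∈ OptPlan μ ν) :
    W2 μ ν = lpNorm (fun p => p.1 - p.2) 2 π := by
  rw [W2, ← hπ.2, sqrt_tCost]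

lemma mem_OptPlan_iff_lintegral_le (hμ : μ ∈ P2 (E := E)) (hν : ν ∈ P2 (E := E)) :
    π ∈ OptPlan μ ν ↔
      π ∈ Coupling μ ν ∧ ∫⁻ p, ‖p.1 - p.2‖ₑ ^ 2 ∂π ≤ ENNReal.ofReal (W2sq μ ν) := by
  refine and_congr_right fun hπ => ?_
  rw [← ofReal_tCost hμ hν hπ, ENNReal.ofReal_le_ofReal_iff (W2sq_nonneg μ ν)]
  exact ⟨le_of_eq, fun h => h.antisymm (W2sq_le_tCost hπ)⟩

lemma ofReal_pivotCost {ρ : Measure (E × E × E)} (hμ : μ ∈ P2 (E := E)) (hξ : ξ ∈ P2 (E := E))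
    (hρ : ρ ∈ Gamma ν μ ξ) :
    ENNReal.ofReal (pivotCost ρ) = ∫⁻ p, ‖p.2.1 - p.2.2‖ₑ ^ 2 ∂ρ := by
  obtain ⟨-, rfl, rfl⟩ := marginals_of_mem_Gamma hρ
  exact ofReal_integral_norm_sq ((memLp_of_map_mem_P2 (by fun_prop) hμ).sub
    (memLp_of_map_mem_P2 (by fun_prop) hξ))

lemma integrable_of_lipschitzWith {f : E → ℝ} {K : NNReal} (hf : LipschitzWith K f)
    (hμ : μ ∈ P2 (E := E)) : Integrable f μ := by
  have := hμ.1
  have norm_integrable : Integrable (fun x => ‖x‖) μ :=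
    ((mem_P2_iff.1 hμ).2.integrable one_le_two).norm
  refine ((norm_integrable.const_mul K).add (integrable_const ‖f 0‖)).mono'
    hf.continuous.aestronglyMeasurable (.of_forall fun x => ?_)
  calc ‖f x‖ ≤ ‖f x - f 0‖ + ‖f 0‖ := norm_le_norm_sub_add _ _
    _ ≤ K * ‖x‖ + ‖f 0‖ := by simpa using hf.norm_sub_le x 0

variable [CompleteSpace E]

lemma OptPlan_nonempty (hμ : μ ∈ P2 (E := E)) (hν : ν ∈ P2 (E := E)) :
    (OptPlan μ ν).Nonempty := by
  have := hμ.1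
  have := hν.1
  let couplings : Set (ProbabilityMeasure (E × E)) := {π | (π : Measure (E × E)) ∈ Coupling μ ν}
  have compact : IsCompact couplings := by
    convert isCompact_setOf_map_fst_mem_map_snd_mem
      (isCompact_singleton (x := (⟨μ, hμ.1⟩ : ProbabilityMeasure E)))
      (isCompact_singleton (x := (⟨ν, hν.1⟩ : ProbabilityMeasure E))) using 1
    ext π
    exact ⟨fun h => ⟨Subtype.ext h.2.1, Subtype.ext h.2.2⟩,
      fun h => ⟨π.2, congrArg Subtype.val h.1, congrArg Subtype.val h.2⟩⟩
  have nonempty : couplings.Nonempty :=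
    ⟨⟨μ.prod ν, inferInstance⟩, (inferInstance : IsProbabilityMeasure (μ.prod ν)),
      by simp, by simp⟩
  obtain ⟨π, hπ, minimal⟩ := (lowerSemicontinuous_lintegral_enorm_sq
    (E := E) (continuous_fst.sub continuous_snd)).lowerSemicontinuousOn couplings
    |>.exists_isMinOn nonempty compact
  refine ⟨π, hπ, le_antisymm (le_csInf ⟨_, π, hπ, rfl⟩ ?_) (W2sq_le_tCost hπ)⟩
  rintro _ ⟨π', hπ', rfl⟩
  rw [← ENNReal.ofReal_le_ofReal_iff (tCost_nonneg π'), ofReal_tCost hμ hν hπ,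
    ofReal_tCost hμ hν hπ']
  exact minimal (show ⟨π', hπ'.1⟩ ∈ couplings from hπ')

lemma Gamma_nonempty (hν : ν ∈ P2 (E := E)) (hμ : μ ∈ P2 (E := E))
    (hξ : ξ ∈ P2 (E := E)) : (Gamma ν μ ξ).Nonempty := by
  obtain ⟨π₁, hπ₁⟩ := OptPlan_nonempty hν hμ
  obtain ⟨π₂, hπ₂⟩ := OptPlan_nonempty hν hξ
  have := hπ₁.1.1
  have := hπ₂.1.1
  obtain ⟨ρ, rfl, rfl⟩ := exists_gluing π₁ π₂ (hπ₁.1.2.1.trans hπ₂.1.2.1.symm)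
  exact ⟨ρ, (Measure.isProbabilityMeasure_map_iff (by fun_prop)).1 hπ₁.1.1, hπ₁, hπ₂⟩

lemma W2_comm (hμ : μ ∈ P2 (E := E)) (hν : ν ∈ P2 (E := E)) :
    W2 μ ν = W2 ν μ := by
  have swap_le {μ ν : Measure E} (hμ : μ ∈ P2 (E := E))
      (hν : ν ∈ P2 (E := E)) : W2 ν μ ≤ W2 μ ν := by
    obtain ⟨π, hπ⟩ := OptPlan_nonempty hμ hν
    obtain ⟨⟨_, rfl, rfl⟩, -⟩ := id hπ
    rw [W2_eq_lpNorm_of_mem_OptPlan hπ]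
    exact (W2_map_le (by fun_prop) (by fun_prop)).trans_eq (lpNorm_sub_comm _ _ _ _)
  exact le_antisymm (swap_le hν hμ) (swap_le hμ hν)

lemma W2_triangle (hμ : μ ∈ P2 (E := E)) (hν : ν ∈ P2 (E := E))
    (hξ : ξ ∈ P2 (E := E)) : W2 μ ξ ≤ W2 μ ν + W2 ν ξ := by
  obtain ⟨ρ, hρ⟩ := Gamma_nonempty hν hμ hξ
  obtain ⟨-, map_fst, map_snd⟩ := marginals_of_mem_Gamma hρ
  obtain ⟨_, hρ₁, hρ₂⟩ := hρ
  have memLp₁ : MemLp (fun p : E × E × E => p.1 - p.2.1) 2 ρ :=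
    (memLp_sub_of_mem_Coupling hν hμ hρ₁.1).comp_of_map (by fun_prop)
  calc W2 μ ξ ≤ lpNorm (fun p : E × E × E => p.2.1 - p.2.2) 2 ρ := by
        rw [← map_fst, ← map_snd]
        exact W2_map_le (by fun_prop) (by fun_prop)
    _ = lpNorm ((fun p : E × E × E => p.1 - p.2.2) - fun p => p.1 - p.2.1) 2 ρ := by
        congr 1; ext p; simp
    _ ≤ lpNorm (fun p : E × E × E => p.1 - p.2.1) 2 ρ +
          lpNorm (fun p : E × E × E => p.1 - p.2.2) 2 ρ := by
        rw [lpNorm_sub_comm]; exact lpNorm_sub_le memLp₁ (by norm_num)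
    _ = W2 μ ν + W2 ν ξ := by
        rw [W2_comm hμ hν, W2_eq_lpNorm_of_mem_OptPlan hρ₁, W2_eq_lpNorm_of_mem_OptPlan hρ₂,
          lpNorm_map (by fun_prop) (by fun_prop), lpNorm_map (by fun_prop) (by fun_prop)]
        rfl

lemma abs_W2_sub_W2_le (hμ : μ ∈ P2 (E := E)) (hν : ν ∈ P2 (E := E)) (hξ : ξ ∈ P2 (E := E)) :
    |W2 μ ξ - W2 ν ξ| ≤ W2 μ ν := by
  rw [abs_sub_le_iff, sub_le_iff_le_add, sub_le_iff_le_add]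
  exact ⟨W2_triangle hμ hν hξ, W2_comm hμ hν ▸ W2_triangle hν hμ hξ⟩

lemma tendsto_W2_of_tendsto_W2_zero {ι : Type*} {l : Filter ι} {μs : ι → Measure E}
    (hμs : ∀ i, μs i ∈ P2 (E := E)) (hμ : μ ∈ P2 (E := E)) (hν : ν ∈ P2 (E := E))
    (h : Tendsto (fun i => W2 (μs i) μ) l (𝓝 0)) :
    Tendsto (fun i => W2 (μs i) ν) l (𝓝 (W2 μ ν)) :=
  tendsto_iff_dist_tendsto_zero.2 <| squeeze_zero (fun _ => dist_nonneg)
    (fun i => abs_W2_sub_W2_le (hμs i) hμ hν) h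

lemma abs_integral_sub_integral_le_mul_W2 {f : E → ℝ} {K : NNReal} (hf : LipschitzWith K f)
    (hμ : μ ∈ P2 (E := E)) (hν : ν ∈ P2 (E := E)) :
    |∫ x, f x ∂μ - ∫ x, f x ∂ν| ≤ K * W2 μ ν := by
  obtain ⟨π, hπ⟩ := OptPlan_nonempty hμ hν
  have memLp := memLp_sub_of_mem_Coupling hμ hν hπ.1
  have f_integrable₁ := integrable_of_lipschitzWith hf hμ
  have f_integrable₂ := integrable_of_lipschitzWith hf hν
  rw [W2_eq_lpNorm_of_mem_OptPlan hπ]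
  obtain ⟨⟨_, rfl, rfl⟩, -⟩ := hπ
  have L1_le_L2 : ∫ p, ‖p.1 - p.2‖ ∂π ≤ lpNorm (fun p => p.1 - p.2) 2 π := by
    rw [← lpNorm_one_eq_integral_norm memLp.1, ← toReal_eLpNorm memLp.1,
      ← toReal_eLpNorm memLp.1]
    exact ENNReal.toReal_mono memLp.2.ne (eLpNorm_le_eLpNorm_of_exponent_le one_le_two memLp.1)
  calc |∫ x, f x ∂π.map Prod.fst - ∫ x, f x ∂π.map Prod.snd|
      = ‖∫ p, (f p.1 - f p.2) ∂π‖ := by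
        rw [integral_map (by fun_prop) f_integrable₁.1, integral_map (by fun_prop) f_integrable₂.1,
          ← Real.norm_eq_abs]
        exact congrArg norm (integral_sub (f_integrable₁.comp_measurable measurable_fst)
          (f_integrable₂.comp_measurable measurable_snd)).symm
    _ ≤ ∫ p, K * ‖p.1 - p.2‖ ∂π :=
        norm_integral_le_of_norm_le ((memLp.integrable one_le_two).norm.const_mul K)
          (.of_forall fun p => hf.norm_sub_le p.1 p.2)
    _ ≤ K * lpNorm (fun p => p.1 - p.2) 2 π := by
        rw [integral_const_mul]
        gcongr

lemma tendsto_of_tendsto_W2_zero {ι : Type*} {l : Filter ι} [l.IsCountablyGenerated]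
    {μs : ι → ProbabilityMeasure E} {μ : ProbabilityMeasure E}
    (hμs : ∀ i, (μs i : Measure E) ∈ P2 (E := E)) (hμ : (μ : Measure E) ∈ P2 (E := E))
    (h : Tendsto (fun i => W2 (μs i : Measure E) μ) l (𝓝 0)) : Tendsto μs l (𝓝 μ) := by
  refine tendsto_iff_forall_lipschitz_integral_tendsto.2 fun f _ ⟨K, hf⟩ => ?_
  refine tendsto_iff_dist_tendsto_zero.2 <| squeeze_zero (fun _ => dist_nonneg)
    (fun i => abs_integral_sub_integral_le_mul_W2 hf (hμs i) hμ) ?_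
  simpa using h.const_mul (K : ℝ)

end QuadraticCost

section PivotFamily

variable {E : Type*} [NormedAddCommGroup E] [MeasurableSpace E] [BorelSpace E]
  [SecondCountableTopology E] {T : Type*} [TopologicalSpace T] {N : T → ProbabilityMeasure E}
  {μ₁ μ₂ : ProbabilityMeasure E}

lemma isClosed_setOf_mem_OptPlan {μ : ProbabilityMeasure E}
    (hNP2 : ∀ t, (N t : Measure E) ∈ P2 (E := E)) (hμ : (μ : Measure E) ∈ P2 (E := E))
    (hN : Continuous N) (hW : Continuous fun t => W2sq (N t : Measure E) μ) :
    IsClosed {p : T × ProbabilityMeasure (E × E) |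
      (p.2 : Measure (E × E)) ∈ OptPlan (N p.1 : Measure E) μ} := by
  have fst_closed : IsClosed {p : T × ProbabilityMeasure (E × E) |
      p.2.map (f := Prod.fst) (by fun_prop) = N p.1} :=
    isClosed_eq ((ProbabilityMeasure.continuous_map continuous_fst).comp continuous_snd)
      (hN.comp continuous_fst)
  have snd_closed : IsClosed {p : T × ProbabilityMeasure (E × E) |
      p.2.map (f := Prod.snd) (by fun_prop) = μ} :=
    isClosed_eq ((ProbabilityMeasure.continuous_map continuous_snd).comp continuous_snd)
      continuous_const
  have cost_closed : IsClosed {p : T × ProbabilityMeasure (E × E) |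
      ∫⁻ q : E × E, ‖q.1 - q.2‖ₑ ^ 2 ∂p.2 ≤ ENNReal.ofReal (W2sq (N p.1 : Measure E) μ)} :=
    (lowerSemicontinuous_lintegral_enorm_sq
      (continuous_fst.sub continuous_snd)).isClosed_epigraph.preimage
        (continuous_snd.prodMk (ENNReal.continuous_ofReal.comp (hW.comp continuous_fst)))
  convert (fst_closed.inter snd_closed).inter cost_closed using 1
  ext ⟨t, π⟩
  refine (mem_OptPlan_iff_lintegral_le (hNP2 t) hμ).trans (and_congr_left' ?_)
  exact ⟨fun h => ⟨Subtype.ext h.2.1, Subtype.ext h.2.2⟩,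
    fun h => ⟨π.2, congrArg Subtype.val h.1, congrArg Subtype.val h.2⟩⟩

lemma isCompact_setOf_mem_Gamma [CompleteSpace E] [CompactSpace T]
    (hNP2 : ∀ t, (N t : Measure E) ∈ P2 (E := E)) (hμ₁ : (μ₁ : Measure E) ∈ P2 (E := E))
    (hμ₂ : (μ₂ : Measure E) ∈ P2 (E := E)) (hN : Continuous N)
    (hW₁ : Continuous fun t => W2sq (N t : Measure E) μ₁)
    (hW₂ : Continuous fun t => W2sq (N t : Measure E) μ₂) :
    IsCompact {p : T × ProbabilityMeasure (E × E × E) |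
      (p.2 : Measure (E × E × E)) ∈ Gamma (N p.1 : Measure E) μ₁ μ₂} := by
  have compact := isCompact_univ (X := T) |>.prod <|
    isCompact_setOf_map_fst_mem_map_snd_mem (isCompact_range hN)
      (isCompact_setOf_map_fst_mem_map_snd_mem (isCompact_singleton (x := μ₁))
        (isCompact_singleton (x := μ₂)))
  have closed {f : E × E × E → E × E} (hf : Continuous f) {μ : ProbabilityMeasure E}
      (hμ : (μ : Measure E) ∈ P2 (E := E)) (hW : Continuous fun t => W2sq (N t : Measure E) μ) :
      IsClosed {p : T × ProbabilityMeasure (E × E × E) |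
        (p.2 : Measure (E × E × E)).map f ∈ OptPlan (N p.1 : Measure E) μ} :=
    (isClosed_setOf_mem_OptPlan hNP2 hμ hN hW).preimage <| continuous_id.prodMap <|
      ProbabilityMeasure.continuous_map hf
  refine compact.of_isClosed_subset ?_ fun ⟨t, ρ⟩ hρ => ?_
  · convert (closed (f := fun p => (p.1, p.2.1)) (by fun_prop) hμ₁ hW₁).inter
      (closed (f := fun p => (p.1, p.2.2)) (by fun_prop) hμ₂ hW₂) using 1
    ext ⟨t, ρ⟩
    exact ⟨And.right, fun h => ⟨ρ.2, h⟩⟩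
  · obtain ⟨map_fst, map_snd_fst, map_snd_snd⟩ := marginals_of_mem_Gamma hρ
    refine ⟨Set.mem_univ t, ⟨t, Subtype.ext map_fst.symm⟩, Subtype.ext ?_, Subtype.ext ?_⟩
    · exact (Measure.map_map measurable_fst measurable_snd).trans map_snd_fst
    · exact (Measure.map_map measurable_snd measurable_snd).trans map_snd_snd

theorem exists_forall_Wnusq_le [CompleteSpace E] [CompactSpace T] [Nonempty T]
    [FirstCountableTopology T] (hNP2 : ∀ t, (N t : Measure E) ∈ P2 (E := E))
    (hμ₁ : (μ₁ : Measure E) ∈ P2 (E := E)) (hμ₂ : (μ₂ : Measure E) ∈ P2 (E := E))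
    (hN : ∀ t, Tendsto (fun s => W2 (N s : Measure E) (N t)) (𝓝 t) (𝓝 0)) :
    ∃ t, ∀ t', Wnusq (N t : Measure E) μ₁ μ₂ ≤ Wnusq (N t' : Measure E) μ₁ μ₂ := by
  have N_continuous : Continuous N := continuous_iff_continuousAt.2 fun t =>
    tendsto_of_tendsto_W2_zero hNP2 (hNP2 t) (hN t)
  have W2sq_continuous {μ : ProbabilityMeasure E} (hμ : (μ : Measure E) ∈ P2 (E := E)) :
      Continuous fun t => W2sq (N t : Measure E) μ := by
    have : Continuous fun t => W2 (N t : Measure E) μ := continuous_iff_continuousAt.2 fun t =>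
      tendsto_W2_of_tendsto_W2_zero hNP2 (hNP2 t) hμ (hN t)
    exact (this.pow 2).congr fun t => Real.sq_sqrt (W2sq_nonneg _ _)
  have Gamma_nonempty (t : T) : (Gamma (N t : Measure E) μ₁ μ₂).Nonempty :=
    Gamma_nonempty (hNP2 t) hμ₁ hμ₂
  obtain ⟨⟨t, ρ⟩, hρ, minimal⟩ := LowerSemicontinuousOn.exists_isMinOn
    (let ⟨ρ, hρ⟩ := Gamma_nonempty (Classical.arbitrary T); ⟨⟨_, ⟨ρ, hρ.1⟩⟩, hρ⟩)
    (isCompact_setOf_mem_Gamma hNP2 hμ₁ hμ₂ N_continuous (W2sq_continuous hμ₁)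
      (W2sq_continuous hμ₂))
    (((lowerSemicontinuous_lintegral_enorm_sq
      (f := fun p : E × E × E => p.2.1 - p.2.2) (by fun_prop)).comp
        continuous_snd).lowerSemicontinuousOn _)
  refine ⟨t, fun t' => ?_⟩
  have pivotCost_nonneg (ρ : Measure (E × E × E)) : 0 ≤ pivotCost ρ :=
    integral_nonneg fun _ => sq_nonneg _
  calc Wnusq (N t : Measure E) μ₁ μ₂ ≤ pivotCost (ρ : Measure (E × E × E)) :=
        csInf_le ⟨0, Set.forall_mem_image.2 fun ρ _ => pivotCost_nonneg ρ⟩ ⟨ρ, hρ, rfl⟩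
    _ ≤ Wnusq (N t' : Measure E) μ₁ μ₂ := by
        refine le_csInf ((Gamma_nonempty t').image _) (Set.forall_mem_image.2 fun ρ' hρ' => ?_)
        rw [← ENNReal.ofReal_le_ofReal_iff (pivotCost_nonneg ρ'), ofReal_pivotCost hμ₁ hμ₂ hρ,
          ofReal_pivotCost hμ₁ hμ₂ hρ']
        exact minimal (show (t', ⟨ρ', hρ'.1⟩) ∈ _ from hρ')

end PivotFamily

section Quantile

lemma quantile_le_iff (ν : Measure ℝ) [IsProbabilityMeasure ν] {t : ℝ}
    (ht : t ∈ Set.Ioo (0 : ℝ) 1) (s : ℝ) : quantile ν t ≤ s ↔ t ≤ ν.real (Set.Iic s) := by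
  have level_set : {s | ENNReal.ofReal t ≤ ν (Set.Iic s)} = {s | t ≤ cdf ν s} := by
    ext s
    rw [Set.mem_ofPred, Set.mem_ofPred, ← ofReal_cdf,
      ENNReal.ofReal_le_ofReal_iff (cdf_nonneg _ _)]
  have nonempty : {s | t ≤ cdf ν s}.Nonempty :=
    ((tendsto_cdf_atTop ν).eventually_const_le ht.2).exists
  have bddBelow : BddBelow {s | t ≤ cdf ν s} := by
    obtain ⟨s, hs⟩ := ((tendsto_cdf_atBot ν).eventually_lt_const ht.1).exists
    exact ⟨s, fun u hu => (monotone_cdf ν).reflect_lt (hs.trans_le hu) |>.le⟩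
  rw [quantile, level_set, ← cdf_eq_real]
  refine ⟨fun h => ?_, csInf_le bddBelow⟩
  have right_continuous : Tendsto (cdf ν) (𝓝[>] s) (𝓝 (cdf ν s)) :=
    ((cdf ν).right_continuous s).mono Set.Ioi_subset_Ici_self
  refine ge_of_tendsto right_continuous ?_
  filter_upwards [self_mem_nhdsWithin] with u hu
  obtain ⟨v, hv, hvu⟩ := exists_lt_of_csInf_lt nonempty (lt_of_le_of_lt h hu)
  exact le_trans hv (monotone_cdf ν hvu.le)

lemma monotoneOn_quantile (ν : Measure ℝ) [IsProbabilityMeasure ν] :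
    MonotoneOn (quantile ν) (Set.Ioo 0 1) := fun _ ha _ hb hab =>
  (quantile_le_iff ν ha _).2 (hab.trans ((quantile_le_iff ν hb _).1 le_rfl))

lemma aemeasurable_quantile (ν : Measure ℝ) [IsProbabilityMeasure ν] :
    AEMeasurable (quantile ν) (volume.restrict (Set.Icc 0 1)) := by
  rw [← restrict_Ioo_eq_restrict_Icc]
  exact aemeasurable_restrict_of_monotoneOn measurableSet_Ioo (monotoneOn_quantile ν)

theorem map_quantile (ν : Measure ℝ) [IsProbabilityMeasure ν] :
    (volume.restrict (Set.Icc 0 1)).map (quantile ν) = ν := by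
  refine Measure.ext_of_Iic _ _ fun s => ?_
  have preimage_ae_eq : quantile ν ⁻¹' Set.Iic s =ᵐ[volume.restrict (Set.Ioo 0 1)]
      Set.Iic (ν.real (Set.Iic s)) := by
    filter_upwards [ae_restrict_mem measurableSet_Ioo] with t ht
    exact propext (quantile_le_iff ν ht s)
  calc (volume.restrict (Set.Icc 0 1)).map (quantile ν) (Set.Iic s)
      = volume.restrict (Set.Icc 0 1) (quantile ν ⁻¹' Set.Iic s) :=
        Measure.map_apply_of_aemeasurable (aemeasurable_quantile ν) measurableSet_Iic
    _ = volume.restrict (Set.Ioo 0 1) (Set.Iic (ν.real (Set.Iic s))) := by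
        rw [← restrict_Ioo_eq_restrict_Icc, measure_congr preimage_ae_eq]
    _ = volume (Set.Ioc 0 (ν.real (Set.Iic s))) := by
        rw [restrict_Ioo_eq_restrict_Ioc, Measure.restrict_apply' measurableSet_Ioc,
          Set.inter_comm, Set.Ioc_inter_Iic, min_eq_right measureReal_le_one]
    _ = ν (Set.Iic s) := by rw [Real.volume_Ioc, sub_zero, ofReal_measureReal]

lemma memLp_quantile {ν : Measure ℝ} (hν : ν ∈ P2 (E := ℝ)) :
    MemLp (quantile ν) 2 (volume.restrict (Set.Icc 0 1)) :=
  have : IsProbabilityMeasure ν := hν.1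
  memLp_of_map_mem_P2 (aemeasurable_quantile ν) ((map_quantile ν).symm ▸ hν)

lemma volume_triangle {x y : ℝ} (h : x ≤ y) :
    volume.restrict {z : ℝ × ℝ | z.1 < z.2} (Set.Ici x ×ˢ Set.Iio y) =
      ENNReal.ofReal ((y - x) ^ 2 / 2) := by
  have eq_regionBetween : Set.Ici x ×ˢ Set.Iio y ∩ {z : ℝ × ℝ | z.1 < z.2} =
      regionBetween id (fun _ => y) (Set.Icc x y) := by
    ext z
    simp only [regionBetween, Set.mem_inter_iff, Set.mem_prod, Set.mem_Ici, Set.mem_Iio,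
      Set.mem_ofPred, Set.mem_Icc, Set.mem_Ioo, id]
    exact ⟨fun h => ⟨⟨h.1.1, (h.2.trans h.1.2).le⟩, h.2, h.1.2⟩,
      fun h => ⟨⟨h.1.1, h.2.2⟩, h.2.1⟩⟩
  rw [Measure.restrict_apply (measurableSet_Ici.prod measurableSet_Iio), eq_regionBetween,
    Measure.volume_eq_prod, volume_regionBetween_eq_integral continuous_id.integrableOn_Icc
      continuous_const.integrableOn_Icc measurableSet_Icc fun s hs => hs.2,
    integral_Icc_eq_integral_Ioc, ← intervalIntegral.integral_of_le h]
  simp only [Pi.sub_apply, id, intervalIntegral.integral_sub intervalIntegrable_const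
    intervalIntegral.intervalIntegrable_id, intervalIntegral.integral_const, integral_id,
    smul_eq_mul]
  ring_nf

lemma enorm_sub_sq_eq_measure_triangles (x y : ℝ) :
    ‖x - y‖ₑ ^ 2 = 2 * (volume.restrict {z : ℝ × ℝ | z.1 < z.2} (Set.Ici x ×ˢ Set.Iio y) +
      volume.restrict {z : ℝ × ℝ | z.1 < z.2} (Set.Ici y ×ˢ Set.Iio x)) := by
  wlog h : x ≤ y generalizing x y
  · rw [add_comm, ← this y x (le_of_not_ge h), enorm_sub_rev]
  have empty : volume.restrict {z : ℝ × ℝ | z.1 < z.2} (Set.Ici y ×ˢ Set.Iio x) = 0 := by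
    rw [Measure.restrict_apply (measurableSet_Ici.prod measurableSet_Iio)]
    refine measure_mono_null (fun z hz => ?_) measure_empty
    exact (h.trans hz.1.1).not_gt (lt_trans hz.2 hz.1.2)
  rw [empty, add_zero, volume_triangle h, ← ofReal_norm, ← ENNReal.ofReal_pow (by simp),
    ← ENNReal.ofReal_ofNat 2, ← ENNReal.ofReal_mul zero_le_two, Real.norm_eq_abs, sq_abs]
  ring_nf

lemma measurableSet_setOf_le_and_lt {X : Type*} [MeasurableSpace X] {f g : X → ℝ}
    (hf : Measurable f) (hg : Measurable g) :
    MeasurableSet {q : X × ℝ × ℝ | f q.1 ≤ q.2.1 ∧ q.2.2 < g q.1} :=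
  (measurableSet_le (hf.comp measurable_fst) measurable_snd.fst).inter
    (measurableSet_lt measurable_snd.snd (hg.comp measurable_fst))

lemma lintegral_measure_Ici_prod_Iio {X : Type*} [MeasurableSpace X] (P : Measure X) [SFinite P]
    (Λ : Measure (ℝ × ℝ)) [SFinite Λ] {f g : X → ℝ} (hf : Measurable f) (hg : Measurable g) :
    ∫⁻ x, Λ (Set.Ici (f x) ×ˢ Set.Iio (g x)) ∂P = ∫⁻ z, P {x | f x ≤ z.1 ∧ z.2 < g x} ∂Λ := by
  have measurableSet := measurableSet_setOf_le_and_lt hf hg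
  exact (Measure.prod_apply measurableSet).symm.trans (Measure.prod_apply_symm measurableSet)

lemma lintegral_enorm_sub_sq (π : Measure (ℝ × ℝ)) [SFinite π] :
    ∫⁻ p, ‖p.1 - p.2‖ₑ ^ 2 ∂π = 2 * (
      (∫⁻ z in {z : ℝ × ℝ | z.1 < z.2}, π {p | p.1 ≤ z.1 ∧ z.2 < p.2}) +
      ∫⁻ z in {z : ℝ × ℝ | z.1 < z.2}, π {p | p.2 ≤ z.1 ∧ z.2 < p.1}) := by
  have measurable : Measurable fun p : ℝ × ℝ =>
      volume.restrict {z : ℝ × ℝ | z.1 < z.2} (Set.Ici p.1 ×ˢ Set.Iio p.2) :=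
    measurable_measure_prodMk_left (measurableSet_setOf_le_and_lt measurable_fst measurable_snd)
  simp_rw [enorm_sub_sq_eq_measure_triangles]
  rw [lintegral_const_mul' _ _ ENNReal.ofNat_ne_top, lintegral_add_left measurable,
    lintegral_measure_Ici_prod_Iio π _ measurable_fst measurable_snd,
    lintegral_measure_Ici_prod_Iio π _ measurable_snd measurable_fst]

lemma measure_Iic_sub_measure_Iic_le {X : Type*} [MeasurableSpace X] (P : Measure X) {f g : X → ℝ}
    (hf : Measurable f) (hg : Measurable g) (s u : ℝ) :
    P.map f (Set.Iic s) - P.map g (Set.Iic u) ≤ P {x | f x ≤ s ∧ u < g x} := by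
  rw [Measure.map_apply hf measurableSet_Iic, Measure.map_apply hg measurableSet_Iic]
  exact le_measure_sdiff.trans (measure_mono fun x hx => ⟨hx.1, not_le.1 hx.2⟩)

lemma volume_quantile_le_lt_quantile (μ ν : Measure ℝ) [IsProbabilityMeasure μ]
    [IsProbabilityMeasure ν] (s u : ℝ) :
    volume.restrict (Set.Icc 0 1) {t | quantile μ t ≤ s ∧ u < quantile ν t} ≤
      μ (Set.Iic s) - ν (Set.Iic u) := by
  have subset_Ioc : {t | quantile μ t ≤ s ∧ u < quantile ν t} ∩ Set.Ioo 0 1 ⊆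
      Set.Ioc (ν.real (Set.Iic u)) (μ.real (Set.Iic s)) := fun t ⟨⟨hs, hu⟩, ht⟩ =>
    ⟨not_le.1 fun h => hu.not_ge ((quantile_le_iff ν ht u).2 h), (quantile_le_iff μ ht s).1 hs⟩
  calc volume.restrict (Set.Icc 0 1) {t | quantile μ t ≤ s ∧ u < quantile ν t}
      = volume ({t | quantile μ t ≤ s ∧ u < quantile ν t} ∩ Set.Ioo 0 1) := by
        rw [← restrict_Ioo_eq_restrict_Icc, Measure.restrict_apply' measurableSet_Ioo]
    _ ≤ volume (Set.Ioc (ν.real (Set.Iic u)) (μ.real (Set.Iic s))) := measure_mono subset_Ioc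
    _ = μ (Set.Iic s) - ν (Set.Iic u) := by
        rw [Real.volume_Ioc, ENNReal.ofReal_sub _ measureReal_nonneg, ofReal_measureReal,
          ofReal_measureReal]

theorem lintegral_enorm_quantile_sub_sq_le {μ ν : Measure ℝ} {π : Measure (ℝ × ℝ)}
    (hπ : π ∈ Coupling μ ν) :
    ∫⁻ t in Set.Icc 0 1, ‖quantile μ t - quantile ν t‖ₑ ^ 2 ≤ ∫⁻ p, ‖p.1 - p.2‖ₑ ^ 2 ∂π := by
  obtain ⟨_, rfl, rfl⟩ := hπ
  set μ := π.map Prod.fst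
  set ν := π.map Prod.snd
  have : IsProbabilityMeasure μ := Measure.isProbabilityMeasure_map (by fun_prop)
  have : IsProbabilityMeasure ν := Measure.isProbabilityMeasure_map (by fun_prop)
  have quantiles_aemeasurable := (aemeasurable_quantile μ).prodMk (aemeasurable_quantile ν)
  rw [← lintegral_map' (f := fun p : ℝ × ℝ => ‖p.1 - p.2‖ₑ ^ 2) (by fun_prop)
    quantiles_aemeasurable, lintegral_enorm_sub_sq, lintegral_enorm_sub_sq]
  gcongr 2 * ((∫⁻ z in _, ?_) + ∫⁻ z in _, ?_) with z z
  · refine (Measure.map_apply_of_aemeasurable quantiles_aemeasurable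
      ((measurableSet_le measurable_fst measurable_const).inter
        (measurableSet_lt measurable_const measurable_snd))).trans_le ?_
    exact (volume_quantile_le_lt_quantile μ ν z.1 z.2).trans
      (measure_Iic_sub_measure_Iic_le π measurable_fst measurable_snd z.1 z.2)
  · refine (Measure.map_apply_of_aemeasurable quantiles_aemeasurable
      ((measurableSet_le measurable_snd measurable_const).inter
        (measurableSet_lt measurable_const measurable_fst))).trans_le ?_
    exact (volume_quantile_le_lt_quantile ν μ z.1 z.2).trans
      (measure_Iic_sub_measure_Iic_le π measurable_snd measurable_fst z.1 z.2)

theorem eLpNorm_quantile_sub_le {Ω : Type*} [MeasurableSpace Ω] {P : Measure Ω}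
    [IsProbabilityMeasure P] {X Y : Ω → ℝ} (hX : AEMeasurable X P) (hY : AEMeasurable Y P) :
    eLpNorm (quantile (P.map X) - quantile (P.map Y)) 2 (volume.restrict (Set.Icc 0 1)) ≤
      eLpNorm (X - Y) 2 P := by
  rw [← (ENNReal.pow_right_strictMono two_ne_zero).le_iff_le, eLpNorm_two_sq, eLpNorm_two_sq]
  refine (lintegral_enorm_quantile_sub_sq_le (map_prodMk_mem_Coupling hX hY)).trans_eq ?_
  exact lintegral_map' (by fun_prop) (hX.prodMk hY)

end Quantile

section Pivot

variable {d : ℕ} {μ μ1 μ2 : Measure (Euc d)}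

instance isProbabilityMeasure_restrict_unitInterval :
    IsProbabilityMeasure (volume.restrict (Set.Icc (0 : ℝ) 1)) := ⟨by simp⟩

/-- The quantile function of the Wasserstein mean of `P_θ#μ1` and `P_θ#μ2`, so that
`μ_θ[μ1, μ2]` is the law of `pivotQuantile θ μ1 μ2 t • θ` for `t` uniform in `[0, 1]`. -/
def pivotQuantile (θ : Euc d) (μ1 μ2 : Measure (Euc d)) (t : ℝ) : ℝ :=
  (1 / 2) * quantile (projLine θ μ1) t + (1 / 2) * quantile (projLine θ μ2) t

lemma memLp_inner (hμ : μ ∈ P2 (E := Euc d)) (θ : Euc d) : MemLp (fun x => ⟪θ, x⟫) 2 μ :=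
  (mem_P2_iff.1 hμ).2.const_inner θ

lemma memLp_quantile_projLine (hμ : μ ∈ P2 (E := Euc d)) (θ : Euc d) :
    MemLp (quantile (projLine θ μ)) 2 (volume.restrict (Set.Icc 0 1)) :=
  have : IsProbabilityMeasure μ := hμ.1
  memLp_quantile (map_mem_P2 (memLp_inner hμ θ))

lemma lpNorm_quantile_projLine_sub_le (hμ : μ ∈ P2 (E := Euc d)) (θ θ' : Euc d) :
    lpNorm (quantile (projLine θ μ) - quantile (projLine θ' μ)) 2
      (volume.restrict (Set.Icc 0 1)) ≤ ‖θ - θ'‖ * lpNorm id 2 μ := by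
  have : IsProbabilityMeasure μ := hμ.1
  have inner_sub_memLp := (memLp_inner hμ θ).sub (memLp_inner hμ θ')
  calc lpNorm (quantile (projLine θ μ) - quantile (projLine θ' μ)) 2
        (volume.restrict (Set.Icc 0 1))
      ≤ lpNorm ((fun x => ⟪θ, x⟫) - fun x => ⟪θ', x⟫) 2 μ := by
        rw [← toReal_eLpNorm inner_sub_memLp.1, ← toReal_eLpNorm
          ((memLp_quantile_projLine hμ θ).sub (memLp_quantile_projLine hμ θ')).1]
        exact ENNReal.toReal_mono inner_sub_memLp.2.ne (eLpNorm_quantile_sub_le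
          (memLp_inner hμ θ).1.aemeasurable (memLp_inner hμ θ').1.aemeasurable)
    _ ≤ ‖θ - θ'‖ * lpNorm id 2 μ := by
        refine lpNorm_le_mul_lpNorm (norm_nonneg _) (mem_P2_iff.1 hμ).2 fun x => ?_
        rw [Pi.sub_apply, ← inner_sub_left]
        exact norm_inner_le_norm _ _

lemma memLp_pivotQuantile (h1 : μ1 ∈ P2 (E := Euc d)) (h2 : μ2 ∈ P2 (E := Euc d)) (θ : Euc d) :
    MemLp (pivotQuantile θ μ1 μ2) 2 (volume.restrict (Set.Icc 0 1)) :=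
  ((memLp_quantile_projLine h1 θ).const_mul _).add ((memLp_quantile_projLine h2 θ).const_mul _)

lemma lpNorm_pivotQuantile_sub_le (h1 : μ1 ∈ P2 (E := Euc d)) (h2 : μ2 ∈ P2 (E := Euc d))
    (θ θ' : Euc d) :
    lpNorm (pivotQuantile θ μ1 μ2 - pivotQuantile θ' μ1 μ2) 2 (volume.restrict (Set.Icc 0 1)) ≤
      (lpNorm id 2 μ1 + lpNorm id 2 μ2) / 2 * ‖θ - θ'‖ := by
  set δ : Measure (Euc d) → ℝ → ℝ := fun μ => quantile (projLine θ μ) - quantile (projLine θ' μ)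
  have half_memLp : MemLp ((1 / 2 : ℝ) • δ μ1) 2 (volume.restrict (Set.Icc 0 1)) :=
    ((memLp_quantile_projLine h1 θ).sub (memLp_quantile_projLine h1 θ')).const_smul _
  have sub_eq : pivotQuantile θ μ1 μ2 - pivotQuantile θ' μ1 μ2 =
      (1 / 2 : ℝ) • δ μ1 + (1 / 2 : ℝ) • δ μ2 := by
    ext t
    simp only [pivotQuantile, δ, Pi.sub_apply, Pi.add_apply, Pi.smul_apply, smul_eq_mul]
    ring
  have triangle := lpNorm_add_le half_memLp one_le_two (g := (1 / 2 : ℝ) • δ μ2)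
  rw [← sub_eq, lpNorm_const_smul, lpNorm_const_smul, coe_nnnorm,
    Real.norm_of_nonneg one_half_pos.le] at triangle
  linarith [lpNorm_quantile_projLine_sub_le h1 θ θ', lpNorm_quantile_projLine_sub_le h2 θ θ']

lemma memLp_pivotQuantile_smul (h1 : μ1 ∈ P2 (E := Euc d)) (h2 : μ2 ∈ P2 (E := Euc d))
    (θ : Euc d) :
    MemLp (fun t => pivotQuantile θ μ1 μ2 t • θ) 2 (volume.restrict (Set.Icc 0 1)) :=
  (memLp_top_const θ).smul (memLp_pivotQuantile h1 h2 θ)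

lemma pivotMiddle_mem_P2 (h1 : μ1 ∈ P2 (E := Euc d)) (h2 : μ2 ∈ P2 (E := Euc d)) (θ : Euc d) :
    pivotMiddle θ μ1 μ2 ∈ P2 (E := Euc d) :=
  map_mem_P2 (memLp_pivotQuantile_smul h1 h2 θ)

lemma W2_pivotMiddle_le (h1 : μ1 ∈ P2 (E := Euc d)) (h2 : μ2 ∈ P2 (E := Euc d)) (θ θ' : Euc d) :
    W2 (pivotMiddle θ μ1 μ2) (pivotMiddle θ' μ1 μ2) ≤
      ‖θ‖ * ((lpNorm id 2 μ1 + lpNorm id 2 μ2) / 2 * ‖θ - θ'‖) +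
        ‖θ - θ'‖ * lpNorm (pivotQuantile θ' μ1 μ2) 2 (volume.restrict (Set.Icc 0 1)) := by
  set q := fun θ => pivotQuantile θ μ1 μ2
  have q_memLp (θ : Euc d) : MemLp (q θ) 2 (volume.restrict (Set.Icc 0 1)) :=
    memLp_pivotQuantile h1 h2 θ
  have q_sub_memLp := (q_memLp θ).sub (q_memLp θ')
  have smul_sub_smul_eq : (fun t => q θ t • θ) - (fun t => q θ' t • θ') =
      (fun t => (q θ - q θ') t • θ) + fun t => q θ' t • (θ - θ') := by
    ext1 t
    simp only [Pi.sub_apply, Pi.add_apply, sub_smul, smul_sub, sub_add_sub_cancel]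
  calc W2 (pivotMiddle θ μ1 μ2) (pivotMiddle θ' μ1 μ2)
      ≤ lpNorm ((fun t => q θ t • θ) - fun t => q θ' t • θ') 2 (volume.restrict (Set.Icc 0 1)) :=
        W2_map_le (memLp_pivotQuantile_smul h1 h2 θ).1.aemeasurable
          (memLp_pivotQuantile_smul h1 h2 θ').1.aemeasurable
    _ ≤ lpNorm (fun t => (q θ - q θ') t • θ) 2 (volume.restrict (Set.Icc 0 1)) +
          lpNorm (fun t => q θ' t • (θ - θ')) 2 (volume.restrict (Set.Icc 0 1)) := by
        rw [smul_sub_smul_eq]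
        exact lpNorm_add_le ((memLp_top_const θ).smul q_sub_memLp) one_le_two
    _ ≤ ‖θ‖ * lpNorm (q θ - q θ') 2 (volume.restrict (Set.Icc 0 1)) +
          ‖θ - θ'‖ * lpNorm (q θ') 2 (volume.restrict (Set.Icc 0 1)) := by
        gcongr
        · exact lpNorm_le_mul_lpNorm (norm_nonneg _) q_sub_memLp fun t =>
            (norm_smul _ _).trans (mul_comm _ _) |>.le
        · exact lpNorm_le_mul_lpNorm (norm_nonneg _) (q_memLp θ') fun t =>
            (norm_smul _ _).trans (mul_comm _ _) |>.le
    _ ≤ _ := by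
        gcongr
        exact lpNorm_pivotQuantile_sub_le h1 h2 θ θ'

theorem tendsto_W2_pivotMiddle (h1 : μ1 ∈ P2 (E := Euc d)) (h2 : μ2 ∈ P2 (E := Euc d))
    (θ : Euc d) :
    Tendsto (fun θ' => W2 (pivotMiddle θ' μ1 μ2) (pivotMiddle θ μ1 μ2)) (𝓝 θ) (𝓝 0) := by
  refine squeeze_zero (fun θ' => Real.sqrt_nonneg _) (fun θ' => W2_pivotMiddle_le h1 h2 θ' θ) ?_
  exact Continuous.tendsto' (by fun_prop) _ _ (by simp)

end Pivot

/-- the infimum over `θ ∈ S^{d-1}` defining the Min-Pivot Sliced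
discrepancy is attained. -/
theorem minPS_attained {d : ℕ} (hd : 0 < d) (μ1 μ2 : Measure (Euc d))
    (h1 : μ1 ∈ (P2 : Set (Measure (Euc d)))) (h2 : μ2 ∈ (P2 : Set (Measure (Euc d)))) :
    ∃ θ : Euc d, ‖θ‖ = 1 ∧
      ∀ θ' : Euc d, ‖θ'‖ = 1 → PSsq θ μ1 μ2 ≤ PSsq θ' μ1 μ2 := by
  have pivot_mem_P2 (θ : Euc d) := pivotMiddle_mem_P2 h1 h2 θ
  let pivot (θ : Metric.sphere (0 : Euc d) 1) : ProbabilityMeasure (Euc d) :=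
    ⟨pivotMiddle θ μ1 μ2, (pivot_mem_P2 θ).1⟩
  have pivot_continuous (θ : Metric.sphere (0 : Euc d) 1) :
      Tendsto (fun θ' => W2 (pivot θ' : Measure (Euc d)) (pivot θ)) (𝓝 θ) (𝓝 0) :=
    (tendsto_W2_pivotMiddle h1 h2 θ).comp continuous_subtype_val.continuousAt
  have : Nonempty (Metric.sphere (0 : Euc d) 1) :=
    ⟨EuclideanSpace.single ⟨0, hd⟩ 1, by simp⟩
  obtain ⟨θ, hθ⟩ := exists_forall_Wnusq_le (N := pivot) (μ₁ := ⟨μ1, h1.1⟩) (μ₂ := ⟨μ2, h2.1⟩)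
    (fun θ => pivot_mem_P2 θ) h1 h2 pivot_continuous
  exact ⟨θ, mem_sphere_zero_iff_norm.1 θ.2,
    fun θ' hθ' => hθ ⟨θ', mem_sphere_zero_iff_norm.2 hθ'⟩⟩

end
end
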